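/- arXiv:math/0009094 — 2 statements merged into one kernel-verified Lean document; each statement's English description precedes it below -/
import Mathlib

section
/- Let T be a regular interval exchange transformation on k intervals, x ∈ [0,1), and U(x) the infinite word coding the orbit of x. Then the complexity function of U(x) satisfies p(n) = n(k−1) + 1 for all n ≥ 1. -/
/-- `w` occurs in the infinite word `U` at position `i`. -/
def OccursAt {A : Type*} (U : ℕ → A) (w : List A) (i : ℕ) : Prop :=
  ∀ j : Fin w.length, U (i + j) = w.get j

/-- `w` is a factor of the infinite word `U`. -/
def IsFactor {A : Type*} (U : ℕ → A) (w : List A) : Prop := ∃ i, OccursAt U w i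

/-- `U` is recurrent: every factor occurs infinitely often. -/
def Recurrent {A : Type*} (U : ℕ → A) : Prop :=
  ∀ w, IsFactor U w → ∀ N, ∃ i, N ≤ i ∧ OccursAt U w i

/-- The set of return words over `w` in `U`: words starting at an occurrence of `w`
and ending just before the next occurrence. -/
def ReturnWords {A : Type*} (U : ℕ → A) (w : List A) : Set (List A) :=
  {r | ∃ i j, OccursAt U w i ∧ OccursAt U w j ∧ i < j ∧
      (∀ t, i < t → t < j → ¬ OccursAt U w t) ∧
      r = List.ofFn (fun t : Fin (j - i) => U (i + t))}

/-- The complexity function: number of distinct factors of length `n`. -/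
noncomputable def Complexity {A : Type*} (U : ℕ → A) (n : ℕ) : ℕ :=
  Set.ncard {w : List A | w.length = n ∧ IsFactor U w}

open Set

/-- Left endpoint of the `i`-th interval: `∑_{j<i} λ_j`. -/
noncomputable def leftPt {k : ℕ} (lam : Fin k → ℝ) (i : Fin k) : ℝ :=
  ∑ j ∈ Finset.univ.filter (fun j => j < i), lam j

/-- The `i`-th exchanged interval `X_i = [∑_{j<i} λ_j, ∑_{j≤i} λ_j)`. -/
def Xint {k : ℕ} (lam : Fin k → ℝ) (i : Fin k) : Set ℝ :=
  Set.Ico (leftPt lam i) (leftPt lam i + lam i)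

/-- The translation amount `a_i = ∑_{ℓ<σ⁻¹(i)} λ_{σ(ℓ)} − ∑_{ℓ<i} λ_ℓ`. -/
noncomputable def transAmt {k : ℕ} (lam : Fin k → ℝ) (σ : Equiv.Perm (Fin k)) (i : Fin k) : ℝ :=
  (∑ j ∈ Finset.univ.filter (fun j => j < σ.symm i), lam (σ j)) - leftPt lam i

/-- `T` is the interval exchange transformation on `[0,1)` with data `(lam, σ)`
(extended by the identity outside `[0,1)`). -/
def IsIET {k : ℕ} (lam : Fin k → ℝ) (σ : Equiv.Perm (Fin k)) (T : ℝ → ℝ) : Prop :=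
  (∀ i, 0 < lam i) ∧ (∑ i, lam i = 1) ∧
  (∀ i, ∀ x ∈ Xint lam i, T x = x + transAmt lam σ i) ∧
  (∀ x, x ∉ Set.Ico (0:ℝ) 1 → T x = x)

/-- Keane's regularity condition: `T^n a_i = a_j` for interior endpoints forces `n = 0, i = j`
(stated symmetrically in `i, j`, which covers negative powers of the bijection `T`). -/
def KeaneRegular {k : ℕ} (lam : Fin k → ℝ) (T : ℝ → ℝ) : Prop :=
  ∀ n : ℕ, ∀ i j : Fin k, (i : ℕ) ≠ 0 → (j : ℕ) ≠ 0 →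
    T^[n] (leftPt lam i) = leftPt lam j → n = 0 ∧ i = j

/-- `U` is the symbolic coding of the `T`-orbit of `x`: `U n = i` iff `T^n x ∈ X_i`. -/
def IsCoding {k : ℕ} (lam : Fin k → ℝ) (T : ℝ → ℝ) (x : ℝ) (U : ℕ → Fin k) : Prop :=
  ∀ n, T^[n] x ∈ Xint lam (U n)

/-- Around any point, a finite set of reals has no other points. -/
lemma exists_gap_of_finite {F : Set ℝ} (hF : F.Finite) (y : ℝ) :
    ∃ ε > 0, ∀ f ∈ F, |f - y| < ε → f = y := by
  have h := (hF.subset (sdiff_subset (t := {y}))).isClosed.isOpen_compl.mem_nhds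
    (show y ∈ (F \ {y})ᶜ by simp)
  obtain ⟨ε, hε, hb⟩ := Metric.mem_nhds_iff.1 h
  refine ⟨ε, hε, fun f hf hfy => ?_⟩
  by_contra hne
  exact hb (show f ∈ Metric.ball y ε from hfy) ⟨hf, hne⟩

/-- Among the points of a finite set in `[c, y]`, together with `c`, there is a last one. -/
lemma exists_last_of_finite {F : Set ℝ} (hF : F.Finite) {c y : ℝ} (hcy : c ≤ y) :
    ∃ p, c ≤ p ∧ p ≤ y ∧ (p = c ∨ p ∈ F) ∧ ∀ f ∈ F, f ∉ Ioc p y := by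
  have hfin : (insert c (F ∩ Icc c y)).Finite := (hF.inter_of_left _).insert c
  obtain ⟨p, hp, hmax⟩ := Set.exists_max_image _ id hfin ⟨c, mem_insert _ _⟩
  have hmax' : ∀ f ∈ F, f ∈ Icc c y → f ≤ p := fun f hf hf' => hmax f (Or.inr ⟨hf, hf'⟩)
  have hcp : c ≤ p := hmax c (mem_insert _ _)
  refine ⟨p, hcp, ?_, ?_, ?_⟩
  · rcases hp with rfl | hp
    · exact hcy
    · exact hp.2.2
  · exact hp.imp id (fun h => h.1)
  · intro f hf hfp
    exact absurd (hmax' f hf ⟨hcp.trans hfp.1.le, hfp.2⟩) (not_le.2 hfp.1)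

/-- A bijection `T` of `[0,1)` that is a translation between consecutive points of the finite
set `A`, with no connection between points of `A`, and with `0` the image of a point of `A`. -/
structure RegularExchange (T : ℝ → ℝ) (A : Set ℝ) : Prop where
  finite : A.Finite
  mapsTo : MapsTo T (Ico 0 1) (Ico 0 1)
  injOn : InjOn T (Ico 0 1)
  surjOn : SurjOn T (Ico 0 1) (Ico 0 1)
  subset : A ⊆ Ioo 0 1
  transl : ∀ y z, 0 ≤ y → y ≤ z → z < 1 → (∀ a ∈ A, a ∉ Ioc y z) → T z = T y + (z - y)
  zero : ∃ a ∈ A, T a = 0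
  keane : ∀ n, ∀ a ∈ A, T^[n] a ∈ A → n = 0

/-- The points at which membership in `V` changes from the left. -/
def jumpSet (V : Set ℝ) : Set ℝ :=
  {p | p ∈ Ioo (0 : ℝ) 1 ∧ ∀ ε > 0, ∃ u, 0 ≤ u ∧ p - ε < u ∧ u < p ∧ ¬ (u ∈ V ↔ p ∈ V)}

/-- Membership in `V` is constant between consecutive points of `F`. -/
def ConstBetween (F V : Set ℝ) : Prop :=
  ∀ y z, 0 ≤ y → y ≤ z → z < 1 → (∀ f ∈ F, f ∉ Ioc y z) → (y ∈ V ↔ z ∈ V)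

lemma ConstBetween.jumpSet_subset {F V : Set ℝ} (hF : F.Finite) (h : ConstBetween F V) :
    jumpSet V ⊆ F := by
  rintro p ⟨hp, hj⟩
  by_contra hpF
  obtain ⟨ε, hε, hgap⟩ := exists_gap_of_finite hF p
  obtain ⟨u, hu0, hu1, hup, hne⟩ := hj ε hε
  refine hne (h u p hu0 hup.le hp.2 fun f hf hfu => hpF ?_)
  have : f = p := hgap f hf (by rw [abs_lt]; constructor <;> linarith [hfu.1, hfu.2])
  exact this ▸ hf

lemma ConstBetween.exists_jump {F V : Set ℝ} (hF : F.Finite) (h : ConstBetween F V)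
    {y z : ℝ} (hy : 0 ≤ y) (hyz : y ≤ z) (hz : z < 1) (hne : ¬ (y ∈ V ↔ z ∈ V)) :
    (jumpSet V).Nonempty := by
  obtain ⟨f, hyf, hfz, hf, hlast⟩ := exists_last_of_finite hF hyz
  have hfV := h f z (hy.trans hyf) hfz hz hlast
  have hfF : f ∈ F := by
    rcases hf with rfl | hf
    · exact absurd hfV hne
    · exact hf
  have hfin : (F ∩ {p | y ≤ p ∧ p ≤ z ∧ ¬ (y ∈ V ↔ p ∈ V)}).Finite := hF.inter_of_left _
  obtain ⟨p, ⟨hpF, hyp, hpz, hpV⟩, hmin⟩ := Set.exists_min_image _ id hfin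
    ⟨f, hfF, hyf, hfz, by rwa [hfV]⟩
  have hlt : y < p := lt_of_le_of_ne hyp (by rintro rfl; exact hpV Iff.rfl)
  refine ⟨p, ⟨hy.trans_lt hlt, hpz.trans_lt hz⟩, fun ε hε => ?_⟩
  obtain ⟨u, hu, hup⟩ := exists_between (max_lt hlt (sub_lt_self p hε))
  have hyu : y < u := (le_max_left _ _).trans_lt hu
  obtain ⟨g, hyg, hgu, hg, hglast⟩ := exists_last_of_finite hF hyu.le
  have hguV := h g u (hy.trans hyg) hgu (by linarith) hglast
  have hyg' : y ∈ V ↔ g ∈ V := by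
    rcases hg with rfl | hg
    · rfl
    · by_contra hcon
      have := hmin g ⟨hg, hyg, by linarith, hcon⟩
      simp only [id] at this
      linarith
  exact ⟨u, by linarith, (le_max_right _ _).trans_lt hu, hup, by rwa [← hguV, ← hyg']⟩

namespace RegularExchange

variable {T : ℝ → ℝ} {A : Set ℝ}

lemma iterate_mem (h : RegularExchange T A) (n : ℕ) {y : ℝ} (hy : y ∈ Ico (0 : ℝ) 1) :
    T^[n] y ∈ Ico (0 : ℝ) 1 := h.mapsTo.iterate n hy

lemma iterate_injOn (h : RegularExchange T A) (n : ℕ) : InjOn T^[n] (Ico 0 1) :=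
  h.injOn.iterate h.mapsTo n

lemma iterate_surjOn (h : RegularExchange T A) (n : ℕ) : SurjOn T^[n] (Ico 0 1) (Ico 0 1) :=
  h.surjOn.iterate n

lemma eq_iterate_sub (h : RegularExchange T A) {m n : ℕ} (hmn : m ≤ n) {y z : ℝ}
    (hy : y ∈ Ico (0 : ℝ) 1) (hz : z ∈ Ico (0 : ℝ) 1) (heq : T^[m] y = T^[n] z) :
    y = T^[n - m] z := by
  apply h.iterate_injOn m hy (h.iterate_mem _ hz)
  rw [← Function.iterate_add_apply, Nat.add_sub_cancel' hmn, heq]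

lemma mem_Ico (h : RegularExchange T A) {a : ℝ} (ha : a ∈ A) : a ∈ Ico (0 : ℝ) 1 :=
  ⟨(h.subset ha).1.le, (h.subset ha).2⟩

lemma keane_of_mem_insert (h : RegularExchange T A) {n : ℕ} {a : ℝ} (ha : a ∈ insert 0 A)
    (hn : T^[n] a ∈ A) : n = 0 := by
  rcases ha with rfl | ha
  · obtain ⟨b, hb, hb0⟩ := h.zero
    have := h.keane (n + 1) b hb (by rwa [Function.iterate_succ_apply, hb0])
    omega
  · exact h.keane n a ha hn

lemma iterate_transl (h : RegularExchange T A) {y z : ℝ} (hy : 0 ≤ y) (hz : z < 1) (m : ℕ)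
    (hA : ∀ q ∈ Ioc y z, ∀ j < m, T^[j] q ∉ A) :
    ∀ w ∈ Icc y z, T^[m] w = T^[m] y + (w - y) := by
  induction m with
  | zero => intro w _; simp
  | succ m ih =>
    have ih' := ih fun q hq j hj => hA q hq j (by omega)
    intro w hw
    have hy1 : y ∈ Ico (0 : ℝ) 1 := ⟨hy, by linarith [hw.1, hw.2]⟩
    have hw1 : w ∈ Ico (0 : ℝ) 1 := ⟨by linarith [hw.1], by linarith [hw.2]⟩
    have hwm := ih' w hw
    rw [Function.iterate_succ_apply', Function.iterate_succ_apply']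
    rw [h.transl (T^[m] y) (T^[m] w) (h.iterate_mem m hy1).1 (by linarith [hw.1])
      (h.iterate_mem m hw1).2, hwm]
    · ring
    · intro a ha hay
      have hq : y + (a - T^[m] y) ∈ Ioc y w := ⟨by linarith [hay.1], by linarith [hay.2]⟩
      refine hA _ ⟨hq.1, hq.2.trans hw.2⟩ m (by omega) ?_
      rw [ih' _ ⟨hq.1.le, hq.2.trans hw.2⟩]
      convert ha using 1
      ring

/-- On an interval on which `T^[m]` is a translation, every intermediate value is attained. -/
lemma exists_iterate_eq {y z : ℝ} {m : ℕ}
    (ht : ∀ w ∈ Icc y z, T^[m] w = T^[m] y + (w - y)) {w g : ℝ} (hw : w ∈ Icc y z)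
    (hg : g ∈ Ioc (T^[m] y) (T^[m] w)) : ∃ u ∈ Ioc y w, T^[m] u = g := by
  have hwm := ht w hw
  have hu : y + (g - T^[m] y) ∈ Ioc y w := ⟨by linarith [hg.1], by linarith [hg.2]⟩
  refine ⟨_, hu, ?_⟩
  rw [ht _ ⟨hu.1.le, hu.2.trans hw.2⟩]
  ring

lemma finite_preimage (h : RegularExchange T A) {G : Set ℝ} (hG : G.Finite) (N : ℕ) :
    {p | p ∈ Ico (0 : ℝ) 1 ∧ ∃ j ≤ N, T^[j] p ∈ G}.Finite := by
  have : {p | p ∈ Ico (0 : ℝ) 1 ∧ ∃ j ≤ N, T^[j] p ∈ G} =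
      ⋃ j ∈ Iic N, Ico 0 1 ∩ T^[j] ⁻¹' G := by
    ext p
    simp
  rw [this]
  refine (finite_Iic N).biUnion fun j _ => ?_
  exact Set.Finite.of_finite_image (f := T^[j]) (hG.subset (by rintro _ ⟨u, hu, rfl⟩; exact hu.2))
    ((h.iterate_injOn j).mono inter_subset_left)

theorem aperiodic (h : RegularExchange T A) {y : ℝ} (hy : y ∈ Ico (0 : ℝ) 1) {m : ℕ}
    (hm : T^[m] y = y) : m = 0 := by
  by_contra hm0
  obtain ⟨p, hp0, hpy, hp, hlast⟩ := exists_last_of_finite (h.finite_preimage h.finite m) hy.1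
  have hpI : p ∈ Ico (0 : ℝ) 1 := ⟨hp0, hpy.trans_lt hy.2⟩
  have ht := h.iterate_transl hp0 hy.2 m
    (fun q hq j hj hqA => hlast q ⟨⟨by linarith [hq.1], by linarith [hq.2, hy.2]⟩, j, hj.le, hqA⟩ hq)
    y ⟨hpy, le_rfl⟩
  have hpm : T^[m] p = p := by linarith
  have key : ∀ a ∈ A, T^[m] a ≠ a := fun a ha hma => hm0 (h.keane m a ha (hma.symm ▸ ha))
  rcases hp with rfl | ⟨-, j, -, hj⟩
  · obtain ⟨a, ha, ha0⟩ := h.zero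
    refine key a ha (h.injOn (h.iterate_mem m (h.mem_Ico ha)) (h.mem_Ico ha) ?_)
    rw [← Function.iterate_succ_apply' T, Function.iterate_succ_apply, ha0, hpm]
  · refine key _ hj ?_
    rw [← Function.iterate_add_apply, add_comm, Function.iterate_add_apply, hpm]

/-- The points of `[c, d)` whose orbit meets `A`, `c` or `d` no later than its first
return to `[c, d)`. -/
def cutSet (T : ℝ → ℝ) (A : Set ℝ) (c d : ℝ) : Set ℝ :=
  {p | p ∈ Ico c d ∧ ∃ m, T^[m] p ∈ insert c (insert d A) ∧
    ∀ j, 0 < j → j < m → T^[j] p ∉ Ico c d}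

lemma cutSet_finite (h : RegularExchange T A) {c d : ℝ} (hc : 0 ≤ c) (hd : d ≤ 1) :
    (cutSet T A c d).Finite := by
  have hG : (insert c (insert d A)).Finite := (h.finite.insert d).insert c
  have hI : Ico c d ⊆ Ico 0 1 := Ico_subset_Ico hc hd
  have hsub : cutSet T A c d ⊆ ⋃ g ∈ insert c (insert d A), insert g
      {p | p ∈ Ico c d ∧ ∃ m, 0 < m ∧ T^[m] p = g ∧
        ∀ j, 0 < j → j < m → T^[j] p ∉ Ico c d} := by
    rintro p ⟨hp, m, hm, hj⟩
    refine mem_biUnion hm ?_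
    rcases Nat.eq_zero_or_pos m with rfl | hm0
    · exact Or.inl rfl
    · exact Or.inr ⟨hp, m, hm0, rfl, hj⟩
  refine (hG.biUnion fun g _ => (Set.Subsingleton.finite ?_).insert g).subset hsub
  have aux : ∀ p q m n, p ∈ Ico c d → q ∈ Ico c d → 0 < m → m ≤ n → T^[m] p = T^[n] q →
      (∀ j, 0 < j → j < n → T^[j] q ∉ Ico c d) → p = q := by
    intro p q m n hp hq hm hmn heq hj
    have hpq := h.eq_iterate_sub hmn (hI hp) (hI hq) heq
    rcases hmn.eq_or_lt with rfl | hlt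
    · simpa using hpq
    · exact absurd (hpq ▸ hp) (hj (n - m) (by omega) (by omega))
  rintro p ⟨hp, m, hm0, hm, hmj⟩ q ⟨hq, n, hn0, hn, hnj⟩
  rcases le_total m n with hmn | hmn
  · exact aux p q m n hp hq hm0 hmn (hm.trans hn.symm) hnj
  · exact (aux q p n m hq hp hn0 hmn (hn.trans hm.symm) hmj).symm

/-- Until the first return of `y`, points not separated from `y` by a cut move along with it. -/
lemma not_mem_before_return (h : RegularExchange T A) {c d y z : ℝ} (hc : 0 ≤ c) (hd : d ≤ 1)
    (hy : c ≤ y) (hz : z < d) (hcut : ∀ q ∈ cutSet T A c d, q ∉ Ioc y z) {m : ℕ}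
    (hm : ∀ j, 0 < j → j < m → T^[j] y ∉ Ico c d) (j : ℕ) (hj : j < m) :
    ∀ q ∈ Ioc y z, T^[j] q ∉ A ∧ (0 < j → T^[j] q ∉ Ico c d) := by
  induction j using Nat.strong_induction_on with
  | _ j ih =>
    have ht := h.iterate_transl (hc.trans hy) (hz.trans_le hd) j
      (fun q hq i hi => (ih i hi (hi.trans hj) q hq).1)
    have hnc : ∀ u ∈ Ioc y z, T^[j] u ∉ insert c (insert d A) := fun u hu hu' =>
      hcut u ⟨⟨by linarith [hu.1], by linarith [hu.2]⟩, j, hu',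
        fun i hi0 hij => (ih i hij (hij.trans hj) u hu).2 hi0⟩ hu
    intro q hq
    refine ⟨fun hqA => hnc q hq (by simp [hqA]), fun hj0 hqJ => ?_⟩
    have hyJ := hm j hj0 hj
    have hqy := ht q ⟨hq.1.le, hq.2⟩
    have hlt : T^[j] y < c := by
      by_contra hcon
      exact hyJ ⟨not_lt.1 hcon, by linarith [hq.1, hqJ.2]⟩
    obtain ⟨u, hu, huc⟩ := exists_iterate_eq ht ⟨hq.1.le, hq.2⟩ ⟨hlt, hqJ.1⟩
    exact hnc u ⟨hu.1, hu.2.trans hq.2⟩ (by simp [huc])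

lemma return_of_return (h : RegularExchange T A) {c d y z : ℝ} (hc : 0 ≤ c) (hd : d ≤ 1)
    (hy : c ≤ y) (hyz : y ≤ z) (hz : z < d) (hcut : ∀ q ∈ cutSet T A c d, q ∉ Ioc y z) {m : ℕ}
    (hm : ∀ j, 0 < j → j < m → T^[j] y ∉ Ico c d) (hmy : T^[m] y ∈ Ico c d) :
    T^[m] z ∈ Ico c d := by
  have hb := h.not_mem_before_return hc hd hy hz hcut hm
  have ht := h.iterate_transl (hc.trans hy) (hz.trans_le hd) m (fun q hq j hj => (hb j hj q hq).1)
  have hzm := ht z ⟨hyz, le_rfl⟩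
  refine ⟨by linarith [hmy.1], ?_⟩
  by_contra hcon
  obtain ⟨u, hu, hud⟩ := exists_iterate_eq ht ⟨hyz, le_rfl⟩ ⟨hmy.2, not_lt.1 hcon⟩
  exact hcut u ⟨⟨by linarith [hu.1], by linarith [hu.2]⟩, m, by simp [hud],
    fun j hj0 hj => (hb j hj u hu).2 hj0⟩ hu

lemma exists_return (h : RegularExchange T A) {c d y : ℝ} (hc : 0 ≤ c) (hd : d ≤ 1)
    (hy : y ∈ Ico c d) : ∃ r, 0 < r ∧ T^[r] y ∈ Ico c d := by
  by_contra! hcon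
  obtain ⟨ε, hε, hgap⟩ := exists_gap_of_finite (h.cutSet_finite hc hd) y
  obtain ⟨z, hyz, hz⟩ := exists_between (lt_min hy.2 (lt_add_of_pos_right y hε))
  have hzd : z < d := hz.trans_le (min_le_left _ _)
  have hzε : z < y + ε := hz.trans_le (min_le_right _ _)
  have hcut : ∀ q ∈ cutSet T A c d, q ∉ Ioc y z := fun q hq hqy => by
    have := hgap q hq (by rw [abs_lt]; constructor <;> linarith [hqy.1, hqy.2])
    linarith [hqy.1]
  have hb : ∀ j, ∀ q ∈ Ioc y z, T^[j] q ∉ A ∧ (0 < j → T^[j] q ∉ Ico c d) := fun j =>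
    h.not_mem_before_return hc hd hy.1 hzd hcut (m := j + 1) (fun i hi _ => hcon i hi) j
      (Nat.lt_succ_self j)
  have hb' : ∀ j, 0 < j → ∀ q ∈ Icc y z, T^[j] q ∉ Ico c d := by
    intro j hj q hq
    rcases hq.1.eq_or_lt with rfl | hlt
    · exact hcon j hj
    · exact (hb j q ⟨hlt, hq.2⟩).2 hj
  have ht := fun m => h.iterate_transl (hc.trans hy.1) (hzd.trans_le hd) m
    (fun q hq j _ => (hb j q hq).1)
  have hIcc : Icc y z ⊆ Ico 0 1 := fun w hw =>
    ⟨by linarith [hw.1, hy.1], by linarith [hw.2]⟩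
  have hyI : y ∈ Ico (0 : ℝ) 1 := hIcc ⟨le_rfl, hyz.le⟩
  have hJ : Icc y z ⊆ Ico c d := fun w hw => ⟨hy.1.trans hw.1, hw.2.trans_lt hzd⟩
  have hl : 0 < z - y := sub_pos.2 hyz
  have hfin : (Set.range fun m => ⌊T^[m] y / (z - y)⌋).Finite := by
    refine (finite_Icc 0 ⌊1 / (z - y)⌋).subset ?_
    rintro _ ⟨m, rfl⟩
    have := h.iterate_mem m hyI
    exact ⟨Int.floor_nonneg.2 (div_nonneg this.1 hl.le), Int.floor_le_floor (by
      gcongr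
      exact this.2.le)⟩
  have hninj : ∃ m n, m < n ∧ ⌊T^[m] y / (z - y)⌋ = ⌊T^[n] y / (z - y)⌋ := by
    by_contra! hne
    refine Set.infinite_range_of_injective (f := fun m => ⌊T^[m] y / (z - y)⌋) ?_ hfin
    intro m n hmn
    rcases lt_trichotomy m n with hlt | heq | hlt
    · exact absurd hmn (hne m n hlt)
    · exact heq
    · exact absurd hmn.symm (hne n m hlt)
  obtain ⟨m, n, hmn, hfl⟩ := hninj
  have habs := Int.abs_sub_lt_one_of_floor_eq_floor hfl
  rw [← sub_div, abs_div, abs_of_pos hl, div_lt_one hl, abs_lt] at habs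
  rcases le_total (T^[m] y) (T^[n] y) with hle | hle
  · have hw : y + (T^[n] y - T^[m] y) ∈ Icc y z := ⟨by linarith, by linarith [habs.1]⟩
    have heq : T^[m] (y + (T^[n] y - T^[m] y)) = T^[n] y := by rw [ht m _ hw]; ring
    have := h.eq_iterate_sub hmn.le (hIcc hw) hyI heq
    exact hcon (n - m) (by omega) (this ▸ hJ hw)
  · have hw : y + (T^[m] y - T^[n] y) ∈ Icc y z := ⟨by linarith, by linarith [habs.2]⟩
    have heq : T^[n] (y + (T^[m] y - T^[n] y)) = T^[m] y := by rw [ht n _ hw]; ring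
    have := h.eq_iterate_sub hmn.le hyI (hIcc hw) heq.symm
    exact hb' (n - m) (by omega) _ hw (this ▸ hy)

/-- Return times to an interval are bounded. -/
theorem exists_return_le (h : RegularExchange T A) {c d : ℝ} (hc : 0 ≤ c) (hd : d ≤ 1) :
    ∃ N, ∀ y ∈ Ico c d, ∃ r ≤ N, 0 < r ∧ T^[r] y ∈ Ico c d := by
  classical
  have hfirst : ∀ y, ∃ r, y ∈ Ico c d → 0 < r ∧ T^[r] y ∈ Ico c d ∧
      ∀ j, 0 < j → j < r → T^[j] y ∉ Ico c d := by
    intro y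
    by_cases hy : y ∈ Ico c d
    · have hex := h.exists_return hc hd hy
      exact ⟨Nat.find hex, fun _ => ⟨(Nat.find_spec hex).1, (Nat.find_spec hex).2,
        fun j hj0 hj hjm => Nat.find_min hex hj ⟨hj0, hjm⟩⟩⟩
    · exact ⟨0, fun h => absurd h hy⟩
  choose r hr using hfirst
  have hfin := h.cutSet_finite hc hd
  obtain ⟨N, hN⟩ := ((hfin.insert c).image r).bddAbove
  refine ⟨N, fun y hy => ?_⟩
  obtain ⟨p, hcp, hpy, hp, hlast⟩ := exists_last_of_finite hfin hy.1
  obtain ⟨h0, hmem, hbefore⟩ := hr p ⟨hcp, hpy.trans_lt hy.2⟩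
  exact ⟨r p, hN ⟨p, hp, rfl⟩, h0,
    h.return_of_return hc hd hcp hpy hy.2 hlast hbefore hmem⟩

lemma mem_jumpSet_iff (h : RegularExchange T A) {V : Set ℝ}
    (hV : ∀ y ∈ Ico (0 : ℝ) 1, y ∈ V ↔ T y ∈ V) {q : ℝ} (hq : q ∈ Ico (0 : ℝ) 1)
    (hqA : q ∉ insert 0 A) : q ∈ jumpSet V ↔ T q ∈ jumpSet V := by
  have hq0 : 0 < q := lt_of_le_of_ne hq.1 fun h0 => hqA (Or.inl h0.symm)
  obtain ⟨ε₀, hε₀, hgap⟩ := exists_gap_of_finite h.finite q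
  obtain ⟨δ, hδ, hδm⟩ := exists_between (lt_min hε₀ hq0)
  have hδε : δ < ε₀ := hδm.trans_le (min_le_left _ _)
  have hδq : δ < q := hδm.trans_le (min_le_right _ _)
  have ht : ∀ u, q - δ ≤ u → u ≤ q → T q = T u + (q - u) := by
    intro u hu huq
    refine h.transl u q (by linarith) huq hq.2 fun a ha hau => hqA (Or.inr ?_)
    rw [← hgap a ha (by rw [abs_lt]; constructor <;> linarith [hau.1, hau.2])]
    exact ha
  have hTq : δ ≤ T q := by
    have h1 := ht (q - δ) le_rfl (by linarith)
    have h2 := (h.mapsTo (x := q - δ) ⟨by linarith, by linarith [hq.2]⟩).1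
    linarith
  constructor
  · rintro ⟨-, hj⟩
    refine ⟨⟨by linarith, (h.mapsTo hq).2⟩, fun ε hε => ?_⟩
    obtain ⟨u, hu0, hu, huq, hne⟩ := hj (min ε δ) (lt_min hε hδ)
    have h1 := min_le_left ε δ
    have h2 := min_le_right ε δ
    have hu1 : u ∈ Ico (0 : ℝ) 1 := ⟨hu0, huq.trans hq.2⟩
    have h3 := ht u (by linarith) huq.le
    exact ⟨T u, (h.mapsTo hu1).1, by linarith, by linarith, by rwa [← hV u hu1, ← hV q hq]⟩
  · rintro ⟨-, hj⟩
    refine ⟨⟨hq0, hq.2⟩, fun ε hε => ?_⟩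
    obtain ⟨v, hv0, hv, hvq, hne⟩ := hj (min ε δ) (lt_min hε hδ)
    have h1 := min_le_left ε δ
    have h2 := min_le_right ε δ
    have hu1 : q - (T q - v) ∈ Ico (0 : ℝ) 1 := ⟨by linarith, by linarith [hq.2]⟩
    have h3 : T (q - (T q - v)) = v := by
      linarith [ht (q - (T q - v)) (by linarith) (by linarith)]
    exact ⟨_, hu1.1, by linarith, by linarith, by rwa [hV _ hu1, h3, hV q hq]⟩

/-- An invariant finite union of intervals has no end point inside `(0,1)`. -/
theorem jumpSet_eq_empty (h : RegularExchange T A) {V : Set ℝ}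
    (hV : ∀ y ∈ Ico (0 : ℝ) 1, y ∈ V ↔ T y ∈ V) (hfin : (jumpSet V).Finite) :
    jumpSet V = ∅ := by
  have hI : ∀ p ∈ jumpSet V, p ∈ Ico (0 : ℝ) 1 := fun p hp => ⟨hp.1.1.le, hp.1.2⟩
  have pigeon : ∀ q : ℕ → ℝ, (∀ n, q n ∈ jumpSet V) → ∃ m n, m < n ∧ q m = q n := by
    intro q hq
    by_contra! hne
    refine Set.infinite_range_of_injective (f := q) ?_
      (hfin.subset (by rintro _ ⟨n, rfl⟩; exact hq n))
    intro m n hmn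
    rcases lt_trichotomy m n with hlt | heq | hlt
    · exact absurd hmn (hne m n hlt)
    · exact heq
    · exact absurd hmn.symm (hne n m hlt)
  rw [Set.eq_empty_iff_forall_notMem]
  intro p hp
  have forward : ∃ n, T^[n] p ∈ A := by
    by_contra! hcon
    have hall : ∀ n, T^[n] p ∈ jumpSet V := by
      intro n
      induction n with
      | zero => exact hp
      | succ n ih =>
        rw [Function.iterate_succ_apply']
        refine (h.mem_jumpSet_iff hV (hI _ ih) ?_).1 ih
        rintro (h0 | hA)
        · exact ih.1.1.ne' h0
        · exact hcon n hA
    obtain ⟨m, n, hmn, heq⟩ := pigeon _ hall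
    have := h.aperiodic (hI p hp) (h.eq_iterate_sub hmn.le (hI p hp) (hI p hp) heq).symm
    omega
  have backward : ∃ n, ∃ a ∈ insert 0 A, T^[n + 1] a = p := by
    by_contra! hcon
    have hall : ∀ n, ∃ q ∈ jumpSet V, T^[n] q = p := by
      intro n
      induction n with
      | zero => exact ⟨p, hp, rfl⟩
      | succ n ih =>
        obtain ⟨q, hq, hqp⟩ := ih
        obtain ⟨q', hq', rfl⟩ := h.surjOn (hI q hq)
        rw [← Function.iterate_succ_apply] at hqp
        exact ⟨q', (h.mem_jumpSet_iff hV hq' fun hA => hcon n q' hA hqp).2 hq, hqp⟩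
    choose q hq hqp using hall
    obtain ⟨m, n, hmn, heq⟩ := pigeon q hq
    have hper : T^[n - m] p = p := by
      rw [← hqp m, ← Function.iterate_add_apply, Nat.sub_add_cancel hmn.le, heq, hqp n, ← heq,
        hqp m]
    have := h.aperiodic (hI p hp) hper
    omega
  obtain ⟨n, hn⟩ := forward
  obtain ⟨m, a, ha, rfl⟩ := backward
  rw [← Function.iterate_add_apply] at hn
  have := h.keane_of_mem_insert ha hn
  omega

/-- Minimality: every forward orbit visits every interval. -/
theorem exists_iterate_mem (h : RegularExchange T A) {x : ℝ} (hx : x ∈ Ico (0 : ℝ) 1) {c d : ℝ}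
    (hc : 0 ≤ c) (hcd : c < d) (hd : d ≤ 1) : ∃ j, T^[j] x ∈ Ico c d := by
  obtain ⟨N, hN⟩ := h.exists_return_le hc hd
  set V : Set ℝ := {y | ∃ j ≤ N, T^[j] y ∈ Ico c d} with hVdef
  set F : Set ℝ := {p | p ∈ Ico (0 : ℝ) 1 ∧ ∃ j ≤ N, T^[j] p ∈ insert c (insert d A)} with hFdef
  have hF : F.Finite := h.finite_preimage ((h.finite.insert d).insert c) N
  have hconst : ConstBetween F V := by
    intro y z hy hyz hz hno
    have ht : ∀ j ≤ N, ∀ w ∈ Icc y z, T^[j] w = T^[j] y + (w - y) := fun j hj =>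
      h.iterate_transl hy hz j fun q hq i hi hqA =>
        hno q ⟨⟨by linarith [hq.1], by linarith [hq.2]⟩, i, by omega, by simp [hqA]⟩ hq
    have hG : ∀ j ≤ N, ∀ g ∈ insert c (insert d A), g ∉ Ioc (T^[j] y) (T^[j] z) := by
      intro j hj g hg hgj
      obtain ⟨u, hu, rfl⟩ := exists_iterate_eq (ht j hj) ⟨hyz, le_rfl⟩ hgj
      exact hno u ⟨⟨by linarith [hu.1], by linarith [hu.2]⟩, j, hj, hg⟩ hu
    have hiff : ∀ j ≤ N, (T^[j] y ∈ Ico c d ↔ T^[j] z ∈ Ico c d) := by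
      intro j hj
      have hle := ht j hj z ⟨hyz, le_rfl⟩
      have hcn := hG j hj c (by simp)
      have hdn := hG j hj d (by simp)
      simp only [mem_Ioc, not_and, not_le] at hcn hdn
      constructor
      · exact fun hm => ⟨by linarith [hm.1], hdn hm.2⟩
      · refine fun hm => ⟨?_, by linarith [hm.2]⟩
        by_contra hlt
        linarith [hcn (not_le.1 hlt), hm.1]
    exact exists_congr fun j => and_congr_right fun hj => hiff j hj
  have hsub : ∀ y, y ∈ V → T y ∈ V := by
    rintro y ⟨j, hj, hjy⟩
    have hstep : ∀ r ≤ N, 0 < r → T^[r] y ∈ Ico c d → T y ∈ V := by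
      intro r hr h0 hry
      refine ⟨r - 1, by omega, ?_⟩
      rwa [← Function.iterate_succ_apply, Nat.succ_eq_add_one, Nat.sub_add_cancel h0]
    rcases Nat.eq_zero_or_pos j with rfl | hj0
    · obtain ⟨r, hr, h0, hry⟩ := hN y hjy
      exact hstep r hr h0 hry
    · exact hstep j hj hj0 hjy
  have hV : ∀ y ∈ Ico (0 : ℝ) 1, y ∈ V ↔ T y ∈ V := by
    refine fun y hy => ⟨hsub y, fun hTy => ?_⟩
    by_contra hyV
    obtain ⟨ε, hε, hgap⟩ := exists_gap_of_finite hF y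
    have hno : ∀ w, w < y + ε → ∀ f ∈ F, f ∉ Ioc y w := by
      intro w hw f hf hfw
      have := hgap f hf (by rw [abs_lt]; constructor <;> linarith [hfw.1, hfw.2])
      linarith [hfw.1]
    have hlt : y < min 1 (y + ε) := lt_min hy.2 (by linarith)
    obtain ⟨N', hN'⟩ := h.exists_return_le (c := y) (d := min 1 (y + ε)) hy.1 (min_le_left _ _)
    obtain ⟨r, -, hr0, hry⟩ := hN' y ⟨le_rfl, hlt⟩
    have hr1 : T^[r] y < 1 := hry.2.trans_le (min_le_left _ _)
    have hr2 : T^[r] y < y + ε := hry.2.trans_le (min_le_right _ _)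
    have hmem : ∀ j, T^[j + 1] y ∈ V := by
      intro j
      induction j with
      | zero => exact hTy
      | succ j ih => rw [Function.iterate_succ_apply']; exact hsub _ ih
    apply hyV
    rw [hconst y (T^[r] y) hy.1 hry.1 hr1 (hno _ hr2)]
    obtain ⟨s, rfl⟩ := Nat.exists_eq_succ_of_ne_zero hr0.ne'
    exact hmem s
  have hempty := h.jumpSet_eq_empty hV (hF.subset (hconst.jumpSet_subset hF))
  have hcI : c ∈ Ico (0 : ℝ) 1 := ⟨hc, hcd.trans_le hd⟩
  have hcV : c ∈ V := ⟨0, Nat.zero_le _, le_rfl, hcd⟩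
  have hxV : x ∈ V := by
    by_contra hxV
    have hne : (jumpSet V).Nonempty := by
      rcases le_total c x with hle | hle
      · exact hconst.exists_jump hF hc hle hx.2 (by tauto)
      · exact hconst.exists_jump hF hx.1 hle hcI.2 (by tauto)
    exact hne.ne_empty hempty
  obtain ⟨j, -, hj⟩ := hxV
  exact ⟨j, hj⟩

/-- The left end points of the intervals of points with equal itineraries of length `n`. -/
def itineraryEndpoints (T : ℝ → ℝ) (A : Set ℝ) (n : ℕ) : Set ℝ :=
  insert 0 {p | p ∈ Ico (0 : ℝ) 1 ∧ ∃ m < n, T^[m] p ∈ A}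

lemma itineraryEndpoints_finite (h : RegularExchange T A) (n : ℕ) :
    (itineraryEndpoints T A n).Finite := by
  refine ((h.finite_preimage h.finite n).subset ?_).insert 0
  rintro p ⟨hp, m, hm, hA⟩
  exact ⟨hp, m, hm.le, hA⟩

lemma ncard_itineraryEndpoints (h : RegularExchange T A) (n : ℕ) :
    (itineraryEndpoints T A n).ncard = n * A.ncard + 1 := by
  have hex : ∀ m : ℕ, ∀ a : ℝ, ∃ p, a ∈ A → p ∈ Ico (0 : ℝ) 1 ∧ T^[m] p = a := by
    intro m a
    by_cases ha : a ∈ A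
    · obtain ⟨p, hp, hpa⟩ := h.iterate_surjOn m (h.mem_Ico ha)
      exact ⟨p, fun _ => ⟨hp, hpa⟩⟩
    · exact ⟨0, fun h => absurd h ha⟩
  choose p hp using hex
  have himage : {p | p ∈ Ico (0 : ℝ) 1 ∧ ∃ m < n, T^[m] p ∈ A} =
      (fun ma : ℕ × ℝ => p ma.1 ma.2) '' (Iio n ×ˢ A) := by
    ext q
    constructor
    · rintro ⟨hq, m, hm, hA⟩
      exact ⟨(m, T^[m] q), ⟨hm, hA⟩, h.iterate_injOn m (hp m _ hA).1 hq (hp m _ hA).2⟩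
    · rintro ⟨⟨m, a⟩, ⟨hm, ha⟩, rfl⟩
      exact ⟨(hp m a ha).1, m, hm, by rwa [(hp m a ha).2]⟩
  have aux : ∀ m l a b, a ∈ A → b ∈ A → m ≤ l → p m a = p l b → m = l := by
    intro m l a b ha hb hml heq
    have h1 : T^[l - m] a = b := by
      rw [← (hp m a ha).2, ← Function.iterate_add_apply, Nat.sub_add_cancel hml, heq,
        (hp l b hb).2]
    have := h.keane (l - m) a ha (h1 ▸ hb)
    omega
  have hinj : InjOn (fun ma : ℕ × ℝ => p ma.1 ma.2) (Iio n ×ˢ A) := by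
    rintro ⟨m, a⟩ ⟨-, ha⟩ ⟨l, b⟩ ⟨-, hb⟩ heq
    simp only at ha hb heq
    obtain rfl : m = l := by
      rcases le_total m l with hml | hml
      · exact aux m l a b ha hb hml heq
      · exact (aux l m b a hb ha hml heq.symm).symm
    rw [← (hp m a ha).2, heq, (hp m b hb).2]
  have hzero : (0 : ℝ) ∉ {p | p ∈ Ico (0 : ℝ) 1 ∧ ∃ m < n, T^[m] p ∈ A} := by
    rintro ⟨-, m, -, hm⟩
    have := h.keane_of_mem_insert (mem_insert 0 A) hm
    subst this
    exact (h.subset hm).1.ne rfl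
  rw [itineraryEndpoints, Set.ncard_insert_of_notMem hzero
    ((h.itineraryEndpoints_finite n).subset (subset_insert _ _)), himage,
    hinj.ncard_image, Set.ncard_prod, Set.ncard_Iio_nat]

variable {α : Type*} {code : ℝ → α}

lemma itinerary_eq_iff (h : RegularExchange T A)
    (hcode : ∀ y z, 0 ≤ y → y ≤ z → z < 1 → (code y = code z ↔ ∀ a ∈ A, a ∉ Ioc y z))
    (n : ℕ) {y z : ℝ} (hy : 0 ≤ y) (hyz : y ≤ z) (hz : z < 1) :
    (∀ j < n, code (T^[j] y) = code (T^[j] z)) ↔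
      ∀ p ∈ itineraryEndpoints T A n, p ∉ Ioc y z := by
  have hyI : y ∈ Ico (0 : ℝ) 1 := ⟨hy, hyz.trans_lt hz⟩
  have hzI : z ∈ Ico (0 : ℝ) 1 := ⟨hy.trans hyz, hz⟩
  have hstep : ∀ j, (∀ w ∈ Icc y z, T^[j] w = T^[j] y + (w - y)) →
      (code (T^[j] y) = code (T^[j] z) ↔ ∀ q ∈ Ioc y z, T^[j] q ∉ A) := by
    intro j ht
    have hjz := ht z ⟨hyz, le_rfl⟩
    rw [hcode _ _ (h.iterate_mem j hyI).1 (by linarith) (h.iterate_mem j hzI).2]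
    constructor
    · intro hno q hq hqA
      have := ht q ⟨hq.1.le, hq.2⟩
      exact hno _ hqA ⟨by linarith [hq.1], by linarith [hq.2]⟩
    · intro hno a ha haj
      obtain ⟨u, hu, rfl⟩ := exists_iterate_eq ht ⟨hyz, le_rfl⟩ haj
      exact hno u hu ha
  constructor
  · intro heq
    have hno : ∀ j, j < n → ∀ q ∈ Ioc y z, T^[j] q ∉ A := by
      intro j
      induction j using Nat.strong_induction_on with
      | _ j ih =>
        intro hj
        exact (hstep j (h.iterate_transl hy hz j
          fun q hq i hi => ih i hi (hi.trans hj) q hq)).1 (heq j hj)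
    rintro p (rfl | ⟨-, j, hj, hjA⟩) hp
    · exact absurd hp.1 (not_lt.2 hy)
    · exact hno j hj p hp hjA
  · intro hno j hj
    have hno' : ∀ i < n, ∀ q ∈ Ioc y z, T^[i] q ∉ A := fun i hi q hq hqA =>
      hno q (Or.inr ⟨⟨by linarith [hq.1], by linarith [hq.2]⟩, i, hi, hqA⟩) hq
    exact (hstep j (h.iterate_transl hy hz j
      fun q hq i hi => hno' i (hi.trans hj) q hq)).2 (hno' j hj)

theorem complexity_eq (h : RegularExchange T A)
    (hcode : ∀ y z, 0 ≤ y → y ≤ z → z < 1 → (code y = code z ↔ ∀ a ∈ A, a ∉ Ioc y z))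
    {x : ℝ} (hx : x ∈ Ico (0 : ℝ) 1) (n : ℕ) :
    Complexity (fun j => code (T^[j] x)) n = n * A.ncard + 1 := by
  have hfin := h.itineraryEndpoints_finite n
  have hI : ∀ p ∈ itineraryEndpoints T A n, p ∈ Ico (0 : ℝ) 1 := by
    rintro p (rfl | hp)
    · exact ⟨le_rfl, zero_lt_one⟩
    · exact hp.1
  have hword : ∀ y z : ℝ, List.ofFn (fun j : Fin n => code (T^[j] y)) =
      List.ofFn (fun j : Fin n => code (T^[j] z)) ↔
      ∀ j < n, code (T^[j] y) = code (T^[j] z) := by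
    intro y z
    rw [List.ofFn_inj, funext_iff]
    exact ⟨fun h j hj => h ⟨j, hj⟩, fun h j => h j j.2⟩
  have hset : {w : List α | w.length = n ∧ IsFactor (fun j => code (T^[j] x)) w} =
      (fun y => List.ofFn (fun j : Fin n => code (T^[j] y))) '' itineraryEndpoints T A n := by
    ext w
    constructor
    · rintro ⟨rfl, i, hi⟩
      have hy := h.iterate_mem i hx
      obtain ⟨p, hp0, hpy, hp, hlast⟩ :=
        exists_last_of_finite (h.itineraryEndpoints_finite w.length) hy.1
      refine ⟨p, hp.elim (fun h0 => Or.inl h0) id, ?_⟩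
      beta_reduce
      rw [(hword p (T^[i] x)).2
        ((h.itinerary_eq_iff hcode _ hp0 hpy hy.2).2 hlast)]
      conv_rhs => rw [← List.ofFn_get w]
      congr 1
      funext j
      rw [← hi j, ← Function.iterate_add_apply, add_comm]
    · rintro ⟨p, hp, rfl⟩
      have hpI := hI p hp
      obtain ⟨ε, hε, hgap⟩ := exists_gap_of_finite hfin p
      obtain ⟨i, hi⟩ := h.exists_iterate_mem hx (c := p) (d := min 1 (p + ε)) hpI.1
        (lt_min hpI.2 (by linarith)) (min_le_left _ _)
      have hi1 : T^[i] x < p + ε := hi.2.trans_le (min_le_right _ _)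
      have heq := (h.itinerary_eq_iff hcode n hpI.1 hi.1 (h.iterate_mem i hx).2).2 <| by
        intro f hf hfp
        have := hgap f hf (by rw [abs_lt]; constructor <;> linarith [hfp.1, hfp.2])
        linarith [hfp.1]
      refine ⟨List.length_ofFn, i, fun j => ?_⟩
      have hj : (j : ℕ) < n := by simpa using j.2
      simp only [List.get_eq_getElem, List.getElem_ofFn]
      rw [heq j hj, ← Function.iterate_add_apply, add_comm]
  have hinj : InjOn (fun y => List.ofFn (fun j : Fin n => code (T^[j] y)))
      (itineraryEndpoints T A n) := by
    have aux : ∀ y ∈ itineraryEndpoints T A n, ∀ z ∈ itineraryEndpoints T A n, y ≤ z →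
        (∀ j < n, code (T^[j] y) = code (T^[j] z)) → y = z := by
      intro y hy z hz hyz heq
      by_contra hne
      exact (h.itinerary_eq_iff hcode n (hI y hy).1 hyz (hI z hz).2).1 heq z hz
        ⟨lt_of_le_of_ne hyz hne, le_rfl⟩
    intro y hy z hz heq
    have heq' := (hword y z).1 heq
    rcases le_total y z with hyz | hyz
    · exact aux y hy z hz hyz heq'
    · exact (aux z hz y hy hyz fun j hj => (heq' j hj).symm).symm
  rw [Complexity, hset, hinj.ncard_image, h.ncard_itineraryEndpoints n]

end RegularExchange

section IntervalPartition

variable {k : ℕ} {lam : Fin k → ℝ}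

lemma leftPt_add_le (hpos : ∀ i, 0 < lam i) {i j : Fin k} (hij : i < j) :
    leftPt lam i + lam i ≤ leftPt lam j := by
  rw [leftPt, leftPt, add_comm, ← Finset.sum_insert (by simp)]
  refine Finset.sum_le_sum_of_subset_of_nonneg ?_ fun l _ _ => (hpos l).le
  intro l hl
  simp only [Finset.mem_insert, Finset.mem_filter, Finset.mem_univ, true_and] at hl ⊢
  rcases hl with rfl | hl
  · exact hij
  · exact hl.trans hij

lemma leftPt_nonneg (hpos : ∀ i, 0 < lam i) (i : Fin k) : 0 ≤ leftPt lam i :=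
  Finset.sum_nonneg fun l _ => (hpos l).le

lemma leftPt_add_le_one (hpos : ∀ i, 0 < lam i) (hsum : ∑ i, lam i = 1) (i : Fin k) :
    leftPt lam i + lam i ≤ 1 := by
  rw [leftPt, add_comm, ← Finset.sum_insert (by simp), ← hsum]
  exact Finset.sum_le_sum_of_subset_of_nonneg (Finset.subset_univ _) fun l _ _ => (hpos l).le

lemma leftPt_eq_zero {i : Fin k} (hi : (i : ℕ) = 0) : leftPt lam i = 0 := by
  rw [leftPt, Finset.filter_false_of_mem, Finset.sum_empty]
  intro j _ hj
  have := Fin.lt_def.1 hj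
  omega

lemma leftPt_of_val_eq_succ {i j : Fin k} (hij : (j : ℕ) = i + 1) :
    leftPt lam j = leftPt lam i + lam i := by
  rw [leftPt, leftPt, add_comm, ← Finset.sum_insert (by simp)]
  congr 1
  ext l
  simp only [Finset.mem_insert, Finset.mem_filter, Finset.mem_univ, true_and, Fin.lt_def,
    Fin.ext_iff]
  omega

lemma leftPt_mem_Xint (hpos : ∀ i, 0 < lam i) (i : Fin k) : leftPt lam i ∈ Xint lam i :=
  ⟨le_rfl, by linarith [hpos i]⟩

lemma Xint_subset (hpos : ∀ i, 0 < lam i) (hsum : ∑ i, lam i = 1) (i : Fin k) :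
    Xint lam i ⊆ Ico 0 1 :=
  Ico_subset_Ico (leftPt_nonneg hpos i) (leftPt_add_le_one hpos hsum i)

lemma le_of_mem_Xint (hpos : ∀ i, 0 < lam i) {i j : Fin k} {y z : ℝ} (hy : y ∈ Xint lam i)
    (hz : z ∈ Xint lam j) (hyz : y ≤ z) : i ≤ j := by
  by_contra hlt
  have := leftPt_add_le hpos (not_le.1 hlt)
  linarith [hy.1, hz.2]

lemma eq_of_mem_Xint (hpos : ∀ i, 0 < lam i) {i j : Fin k} {y : ℝ} (hi : y ∈ Xint lam i)
    (hj : y ∈ Xint lam j) : i = j :=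
  le_antisymm (le_of_mem_Xint hpos hi hj le_rfl) (le_of_mem_Xint hpos hj hi le_rfl)

lemma leftPt_injective (hpos : ∀ i, 0 < lam i) : Function.Injective (leftPt lam) :=
  fun i j h => eq_of_mem_Xint hpos (leftPt_mem_Xint hpos i) (h ▸ leftPt_mem_Xint hpos j)

lemma exists_mem_Xint (hsum : ∑ i, lam i = 1) {y : ℝ}
    (hy : y ∈ Ico (0 : ℝ) 1) : ∃ i, y ∈ Xint lam i := by
  have hk : 0 < k := by
    rcases Nat.eq_zero_or_pos k with rfl | hk
    · simp at hsum
    · exact hk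
  obtain ⟨i, hi, hmax⟩ := Finset.exists_max_image
    (Finset.univ.filter fun i => leftPt lam i ≤ y) id
    ⟨⟨0, hk⟩, by simpa [leftPt_eq_zero] using hy.1⟩
  simp only [Finset.mem_filter, Finset.mem_univ, true_and, id] at hi hmax
  refine ⟨i, hi, ?_⟩
  by_contra! hcon
  by_cases hlast : (i : ℕ) + 1 < k
  · have := hmax ⟨i + 1, hlast⟩ (by rwa [leftPt_of_val_eq_succ (i := i) rfl])
    have := Fin.le_def.1 this
    simp at this
  · have : leftPt lam i + lam i = 1 := by
      rw [leftPt, add_comm, ← Finset.sum_insert (by simp), ← hsum]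
      congr 1
      ext l
      simp only [Finset.mem_insert, Finset.mem_filter, Finset.mem_univ, true_and, Fin.lt_def,
        Fin.ext_iff, iff_true]
      omega
    linarith [hy.2]

/-- The interior end points of the exchanged intervals. -/
def separators (lam : Fin k → ℝ) : Set ℝ := leftPt lam '' {i | (i : ℕ) ≠ 0}

lemma separators_ncard (hpos : ∀ i, 0 < lam i) (hk : 0 < k) :
    (separators lam).ncard = k - 1 := by
  have : {i : Fin k | (i : ℕ) ≠ 0} = {⟨0, hk⟩}ᶜ := by
    ext i
    simp [Fin.ext_iff]
  rw [separators, Set.ncard_image_of_injective _ (leftPt_injective hpos), this,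
    Set.ncard_compl, Set.ncard_singleton, Nat.card_eq_fintype_card, Fintype.card_fin]

lemma eq_iff_no_separator (hpos : ∀ i, 0 < lam i) {i j : Fin k} {y z : ℝ}
    (hy : y ∈ Xint lam i) (hz : z ∈ Xint lam j) (hyz : y ≤ z) :
    i = j ↔ ∀ a ∈ separators lam, a ∉ Ioc y z := by
  constructor
  · rintro rfl _ ⟨l, -, rfl⟩ hl
    have h1 := le_of_mem_Xint hpos hy (leftPt_mem_Xint hpos l) hl.1.le
    have h2 := le_of_mem_Xint hpos (leftPt_mem_Xint hpos l) hz hl.2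
    obtain rfl := le_antisymm h1 h2
    exact absurd hl.1 (not_lt.2 hy.1)
  · intro hno
    by_contra hne
    have hlt := lt_of_le_of_ne (le_of_mem_Xint hpos hy hz hyz) hne
    refine hno (leftPt lam j) ⟨j, ?_, rfl⟩ ⟨hy.2.trans_le (leftPt_add_le hpos hlt), hz.1⟩
    have := Fin.lt_def.1 hlt
    simp only [mem_ofPred_eq]
    omega

end IntervalPartition

section IET

variable {k : ℕ} {lam : Fin k → ℝ} {σ : Equiv.Perm (Fin k)} {T : ℝ → ℝ}

lemma IsIET.apply_eq (hT : IsIET lam σ T) {i : Fin k} {y : ℝ} (hy : y ∈ Xint lam i) :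
    T y = leftPt (lam ∘ σ) (σ.symm i) + (y - leftPt lam i) := by
  have h : transAmt lam σ i = leftPt (lam ∘ σ) (σ.symm i) - leftPt lam i := rfl
  rw [hT.2.2.1 i y hy, h]
  ring

lemma IsIET.apply_mem (hT : IsIET lam σ T) {i : Fin k} {y : ℝ} (hy : y ∈ Xint lam i) :
    T y ∈ Xint (lam ∘ σ) (σ.symm i) := by
  rw [hT.apply_eq hy]
  refine ⟨by linarith [hy.1], ?_⟩
  simp only [Function.comp_apply, Equiv.apply_symm_apply]
  linarith [hy.2]

lemma IsIET.pos_comp (hT : IsIET lam σ T) (i : Fin k) : 0 < (lam ∘ σ) i := hT.1 _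

lemma IsIET.sum_comp (hT : IsIET lam σ T) : ∑ i, (lam ∘ σ) i = 1 := by
  rw [← hT.2.1]
  exact Equiv.sum_comp σ lam

lemma IsIET.apply_leftPt (hT : IsIET lam σ T) (i : Fin k) :
    T (leftPt lam (σ i)) = leftPt (lam ∘ σ) i := by
  rw [hT.apply_eq (leftPt_mem_Xint hT.1 _)]
  simp

/-- A regular exchange does not fix the first interval. -/
lemma IsIET.perm_zero_ne (hT : IsIET lam σ T) (hreg : KeaneRegular lam T) (hk : 1 < k) :
    (σ ⟨0, by omega⟩ : ℕ) ≠ 0 := by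
  intro h0
  have hσ0 : σ ⟨0, by omega⟩ = ⟨0, by omega⟩ := Fin.ext h0
  have hσ1 : (σ ⟨1, hk⟩ : ℕ) ≠ 0 := by
    intro h1
    have : σ ⟨1, hk⟩ = σ ⟨0, by omega⟩ := Fin.ext (h1.trans h0.symm)
    simpa using σ.injective this
  have := hreg 1 (σ ⟨1, hk⟩) ⟨1, hk⟩ hσ1 one_ne_zero <| by
    rw [Function.iterate_one, hT.apply_leftPt,
      leftPt_of_val_eq_succ (i := ⟨0, by omega⟩) rfl,
      leftPt_of_val_eq_succ (lam := lam) (i := ⟨0, by omega⟩) rfl,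
      leftPt_eq_zero rfl, leftPt_eq_zero rfl, Function.comp_apply, hσ0]
  exact one_ne_zero this.1

theorem IsIET.regularExchange (hT : IsIET lam σ T) (hreg : KeaneRegular lam T) (hk : 1 < k) :
    RegularExchange T (separators lam) where
  finite := (Set.toFinite _).image _
  mapsTo y hy := by
    obtain ⟨i, hi⟩ := exists_mem_Xint hT.2.1 hy
    exact Xint_subset hT.pos_comp hT.sum_comp _ (hT.apply_mem hi)
  injOn y hy z hz heq := by
    obtain ⟨i, hi⟩ := exists_mem_Xint hT.2.1 hy
    obtain ⟨j, hj⟩ := exists_mem_Xint hT.2.1 hz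
    obtain rfl : i = j := σ.symm.injective
      (eq_of_mem_Xint hT.pos_comp (hT.apply_mem hi) (heq ▸ hT.apply_mem hj))
    rw [hT.apply_eq hi, hT.apply_eq hj] at heq
    linarith
  surjOn w hw := by
    obtain ⟨j, hj⟩ := exists_mem_Xint hT.sum_comp hw
    have hy : w - leftPt (lam ∘ σ) j + leftPt lam (σ j) ∈ Xint lam (σ j) := by
      have h2 : w < leftPt (lam ∘ σ) j + lam (σ j) := hj.2
      exact ⟨by linarith [hj.1], by linarith⟩
    refine ⟨_, Xint_subset hT.1 hT.2.1 _ hy, ?_⟩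
    rw [hT.apply_eq hy, Equiv.symm_apply_apply]
    ring
  subset := by
    rintro _ ⟨i, hi, rfl⟩
    refine ⟨?_, (Xint_subset hT.1 hT.2.1 i (leftPt_mem_Xint hT.1 i)).2⟩
    have h0 : (⟨0, by omega⟩ : Fin k) < i := Fin.lt_def.2 (Nat.pos_of_ne_zero hi)
    have := leftPt_add_le hT.1 h0
    linarith [hT.1 ⟨0, by omega⟩, leftPt_nonneg hT.1 ⟨0, by omega⟩]
  transl y z hy hyz hz hno := by
    obtain ⟨i, hi⟩ := exists_mem_Xint hT.2.1 ⟨hy, hyz.trans_lt hz⟩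
    obtain ⟨j, hj⟩ := exists_mem_Xint hT.2.1 ⟨hy.trans hyz, hz⟩
    obtain rfl := (eq_iff_no_separator hT.1 hi hj hyz).2 hno
    rw [hT.apply_eq hi, hT.apply_eq hj]
    ring
  zero := ⟨_, ⟨σ ⟨0, by omega⟩, hT.perm_zero_ne hreg hk, rfl⟩, by
    rw [hT.apply_leftPt, leftPt_eq_zero rfl]⟩
  keane := by
    rintro n _ ⟨i, hi, rfl⟩ ⟨j, hj, hij⟩
    exact (hreg n i j hi hj hij.symm).1

end IET

/-- the coding of a point under a regular interval exchange on `k`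
intervals has complexity `p(n) = n(k-1) + 1` for all `n ≥ 1`. -/
theorem complexity_of_regular_iet_coding
    (k : ℕ) (lam : Fin k → ℝ) (σ : Equiv.Perm (Fin k)) (T : ℝ → ℝ)
    (hT : IsIET lam σ T) (hreg : KeaneRegular lam T)
    (x : ℝ) (hx : x ∈ Set.Ico (0:ℝ) 1)
    (U : ℕ → Fin k) (hU : IsCoding lam T x U) :
    ∀ n : ℕ, 1 ≤ n → Complexity U n = n * (k - 1) + 1 := by
  intro n _
  have hk : 0 < k := (U 0).pos
  rcases (Nat.succ_le_of_lt hk).eq_or_lt with rfl | hk1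
  · have hset : {w : List (Fin 1) | w.length = n ∧ IsFactor U w} = {List.replicate n 0} := by
      ext w
      simp only [mem_ofPred_eq, mem_singleton_iff, List.eq_replicate_iff]
      exact and_congr_right fun _ =>
        ⟨fun _ b _ => Subsingleton.elim _ _, fun _ => ⟨0, fun j => Subsingleton.elim _ _⟩⟩
    rw [Complexity, hset, Set.ncard_singleton]
    simp
  · have hex : ∀ y : ℝ, ∃ i : Fin k, y ∈ Ico (0 : ℝ) 1 → y ∈ Xint lam i := by
      intro y
      by_cases hy : y ∈ Ico (0 : ℝ) 1
      · obtain ⟨i, hi⟩ := exists_mem_Xint hT.2.1 hy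
        exact ⟨i, fun _ => hi⟩
      · exact ⟨U 0, fun h => absurd h hy⟩
    choose code hcode using hex
    have h := hT.regularExchange hreg hk1
    have hUcode : U = fun j => code (T^[j] x) :=
      funext fun j => eq_of_mem_Xint hT.1 (hU j) (hcode _ (h.iterate_mem j hx))
    rw [hUcode, h.complexity_eq (fun y z hy hyz hz => eq_iff_no_separator hT.1
      (hcode y ⟨hy, hyz.trans_lt hz⟩) (hcode z ⟨hy.trans hyz, hz⟩) hyz) hx n,
      separators_ncard hT.1 hk]
end

section
/- Let u be the coding of a rotation by irrational α on the circle with respect to a partition into k intervals whose lengths are rationally independent, and suppose one of the intervals has length α. Then for every factor w of u, the number of return words over w is exactly k (property R_k). -/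
open Set

theorem Irrational.exists_nat_fract_mem_Ioo {α : ℝ} (hα : Irrational α) (x : ℝ) {a b : ℝ}
    (ha : 0 ≤ a) (hab : a < b) (hb : b ≤ 1) :
    ∃ n : ℕ, Int.fract (x + n * α) ∈ Ioo a b := by
  have step : ∀ θ y c d : ℝ, 0 < θ → θ < d - c → y < c → ∃ m : ℕ, y + m * θ ∈ Ioo c d := by
    intro θ y c d hθ hd hy
    have hq : 0 ≤ (c - y) / θ := div_nonneg (by linarith) hθ.le
    refine ⟨⌊(c - y) / θ⌋₊ + 1, ?_, ?_⟩
    · have := (div_lt_iff₀ hθ).1 (Nat.lt_floor_add_one ((c - y) / θ))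
      push_cast
      linarith
    · have := (le_div_iff₀ hθ).1 (Nat.floor_le hq)
      push_cast
      linarith
  obtain ⟨N, hN⟩ := exists_nat_one_div_lt (sub_pos.2 hab)
  obtain ⟨j, k, hk, -, hjk⟩ := Real.exists_int_int_abs_mul_sub_le α (Nat.succ_pos N)
  have hsmall : |(k : ℝ) * α - j| < b - a := by
    refine lt_of_le_of_lt hjk (lt_trans ?_ hN)
    push_cast
    gcongr
    linarith
  have hne : (k : ℝ) * α - j ≠ 0 := by
    have := (hα.intCast_mul hk.ne').sub_intCast j
    exact this.ne_zero
  lift k to ℕ using hk.le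
  rw [Int.cast_natCast] at hsmall hne
  have key : ∀ m : ℕ, ∀ M : ℤ, x + m * ((k : ℝ) * α - j) - M ∈ Ioo a b →
      ∃ n : ℕ, Int.fract (x + n * α) ∈ Ioo a b := by
    intro m M h
    refine ⟨m * k, ?_⟩
    have : Int.fract (x + ((m * k : ℕ) : ℝ) * α) = x + m * ((k : ℝ) * α - j) - M := by
      rw [Int.fract_eq_iff]
      refine ⟨by linarith [h.1], by linarith [h.2], m * j + M, ?_⟩
      push_cast
      ring
    rwa [this]
  rcases lt_or_gt_of_ne hne with hneg | hpos
  · rw [abs_of_neg hneg] at hsmall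
    obtain ⟨m, hm1, hm2⟩ := step (-((k : ℝ) * α - j)) (-x) (-((⌊x⌋ - 2 : ℤ) : ℝ) - b)
      (-((⌊x⌋ - 2 : ℤ) : ℝ) - a) (by linarith) (by linarith)
      (by push_cast; linarith [Int.floor_le x])
    exact key m (⌊x⌋ - 2) ⟨by linarith, by linarith⟩
  · rw [abs_of_pos hpos] at hsmall
    obtain ⟨m, hm1, hm2⟩ := step ((k : ℝ) * α - j) x (((⌊x⌋ + 1 : ℤ) : ℝ) + a)
      (((⌊x⌋ + 1 : ℤ) : ℝ) + b) (by linarith) (by linarith)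
      (by push_cast; linarith [Int.lt_floor_add_one x])
    exact key m (⌊x⌋ + 1) ⟨by linarith, by linarith⟩

/-- The `t`-th iterate of the rotation by `α`, with values in `[0, 1)`. -/
noncomputable def rot (α : ℝ) (t : ℕ) (y : ℝ) : ℝ := Int.fract (y + t * α)

theorem rot_mem (α : ℝ) (t : ℕ) (y : ℝ) : rot α t y ∈ Ico (0 : ℝ) 1 :=
  ⟨Int.fract_nonneg _, Int.fract_lt_one _⟩

theorem rot_zero {α y : ℝ} (hy : y ∈ Ico (0 : ℝ) 1) : rot α 0 y = y := by
  simpa [rot, Int.fract_eq_self] using hy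

theorem rot_add (α : ℝ) (s t : ℕ) (y : ℝ) : rot α (s + t) y = rot α s (rot α t y) := by
  unfold rot
  rw [Int.fract_eq_fract]
  refine ⟨⌊y + t * α⌋, ?_⟩
  rw [Int.fract]
  push_cast
  ring

/-- Two reals are related if they differ by an element of `ℤ + ℤα`. -/
def SameOrbit (α y z : ℝ) : Prop := ∃ m n : ℤ, y - z = m + n * α

theorem SameOrbit.symm {α y z : ℝ} (h : SameOrbit α y z) : SameOrbit α z y := by
  obtain ⟨m, n, h⟩ := h
  exact ⟨-m, -n, by push_cast; linarith⟩

theorem SameOrbit.trans {α y z v : ℝ} (h : SameOrbit α y z) (h' : SameOrbit α z v) :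
    SameOrbit α y v := by
  obtain ⟨m, n, h⟩ := h
  obtain ⟨m', n', h'⟩ := h'
  exact ⟨m + m', n + n', by push_cast; linarith⟩

theorem sameOrbit_rot (α : ℝ) (t : ℕ) (y : ℝ) : SameOrbit α (rot α t y) y :=
  ⟨-⌊y + t * α⌋, t, by rw [rot, Int.fract]; push_cast; ring⟩

theorem rot_injOn (α : ℝ) (t : ℕ) : InjOn (rot α t) (Ico (0 : ℝ) 1) := by
  intro y hy z hz h
  obtain ⟨m, hm⟩ := Int.fract_eq_fract.1 h
  have : Int.fract y = Int.fract z := Int.fract_eq_fract.2 ⟨m, by linarith⟩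
  rwa [Int.fract_eq_self.2 hy, Int.fract_eq_self.2 hz] at this

theorem rot_ne_self {α : ℝ} (hα : Irrational α) {t : ℕ} (ht : t ≠ 0) (y : ℝ) :
    rot α t y ≠ y := by
  intro h
  obtain ⟨-, -, m, hm⟩ := Int.fract_eq_iff.1 h
  have := (hα.natCast_mul ht).ne_int m
  exact this (by linarith)

/-- A partition of `[0, 1)` into half-open intervals `[left l, right l)`, the rightmost of which
has length `α`, so that the rotation by `α` is an exchange of these intervals. The interior
division points lie on pairwise distinct orbits of the rotation. -/
structure CyclicExchange (A : Type*) where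
  α : ℝ
  irrational : Irrational α
  pos : 0 < α
  lt_one : α < 1
  left : A → ℝ
  right : A → ℝ
  code : ℝ → A
  first : A
  last : A
  left_first : left first = 0
  left_last : left last = 1 - α
  right_last : right last = 1
  left_nonneg : ∀ l, 0 ≤ left l
  left_lt_right : ∀ l, left l < right l
  right_le_one : ∀ l, right l ≤ 1
  code_eq_iff : ∀ y ∈ Ico (0 : ℝ) 1, ∀ l, code y = l ↔ y ∈ Ico (left l) (right l)
  eq_of_sameOrbit : ∀ l l', l ≠ first → l' ≠ first → SameOrbit α (left l) (left l') → l = l'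

namespace CyclicExchange

variable {A : Type*} (E : CyclicExchange A)

theorem left_mem (l : A) : E.left l ∈ Ico (0 : ℝ) 1 :=
  ⟨E.left_nonneg l, (E.left_lt_right l).trans_le (E.right_le_one l)⟩

theorem code_left (l : A) : E.code (E.left l) = l :=
  (E.code_eq_iff _ (E.left_mem l) l).2 ⟨le_rfl, E.left_lt_right l⟩

theorem last_ne_first : E.last ≠ E.first := by
  intro h
  have := E.left_last
  rw [h, E.left_first] at this
  linarith [E.lt_one]

theorem rot_one_left_last : rot E.α 1 (E.left E.last) = 0 := by
  rw [rot, E.left_last]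
  simp

theorem left_code_le {y : ℝ} (hy : y ∈ Ico (0 : ℝ) 1) : E.left (E.code y) ≤ y :=
  ((E.code_eq_iff y hy _).1 rfl).1

theorem lt_right_code {y : ℝ} (hy : y ∈ Ico (0 : ℝ) 1) : y < E.right (E.code y) :=
  ((E.code_eq_iff y hy _).1 rfl).2

/-- The coding of the orbit of `y`. -/
noncomputable def word (y : ℝ) (t : ℕ) : A := E.code (rot E.α t y)

theorem word_rot (y : ℝ) (s t : ℕ) : E.word (rot E.α s y) t = E.word y (t + s) := by
  rw [word, word, rot_add]

/-- The codings of `y` and `z` agree on their first `N` letters. -/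
def Agree (N : ℕ) (y z : ℝ) : Prop := ∀ t < N, E.word y t = E.word z t

variable {E}

theorem Agree.symm {N : ℕ} {y z : ℝ} (h : E.Agree N y z) : E.Agree N z y :=
  fun t ht => (h t ht).symm

theorem Agree.trans {N : ℕ} {x y z : ℝ} (h : E.Agree N x y) (h' : E.Agree N y z) :
    E.Agree N x z := fun t ht => (h t ht).trans (h' t ht)

theorem Agree.mono {M N : ℕ} {y z : ℝ} (h : E.Agree N y z) (hMN : M ≤ N) : E.Agree M y z :=
  fun t ht => h t (ht.trans_le hMN)

open Classical in
theorem rot_one_sub {y z : ℝ} (hy : y ∈ Ico (0 : ℝ) 1) (hz : z ∈ Ico (0 : ℝ) 1)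
    (h : E.code y = E.code z) : rot E.α 1 z - rot E.α 1 y = z - y := by
  have hlast : ∀ v ∈ Ico (0 : ℝ) 1, E.code v = E.last ↔ 1 - E.α ≤ v := by
    intro v hv
    rw [E.code_eq_iff v hv, E.left_last, E.right_last]
    exact ⟨fun h => h.1, fun h => ⟨h, hv.2⟩⟩
  have hpos := E.pos
  have hone := E.lt_one
  have hrot : ∀ v ∈ Ico (0 : ℝ) 1,
      rot E.α 1 v = if E.code v = E.last then v + E.α - 1 else v + E.α := by
    intro v hv
    rw [rot, Int.fract_eq_iff]
    split_ifs with hc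
    · have := (hlast v hv).1 hc
      exact ⟨by linarith, by linarith [hv.2], 1, by push_cast; ring⟩
    · rw [hlast v hv, not_le] at hc
      exact ⟨by linarith [hv.1], by linarith, 0, by push_cast; ring⟩
  rw [hrot y hy, hrot z hz, h]
  split_ifs <;> ring

theorem Agree.rot_sub {N : ℕ} {y z : ℝ} (hy : y ∈ Ico (0 : ℝ) 1) (hz : z ∈ Ico (0 : ℝ) 1)
    (h : E.Agree N y z) {t : ℕ} (ht : t ≤ N) : rot E.α t z - rot E.α t y = z - y := by
  induction t with
  | zero => rw [rot_zero hy, rot_zero hz]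
  | succ t ih =>
    rw [add_comm t 1, rot_add, rot_add, rot_one_sub (rot_mem _ _ _) (rot_mem _ _ _) (h t ht)]
    exact ih (by omega)

theorem Agree.succ {N : ℕ} {y z : ℝ} (hy : y ∈ Ico (0 : ℝ) 1) (hz : z ∈ Ico (0 : ℝ) 1)
    (h : E.Agree N y z) (h1 : E.left (E.word y N) ≤ rot E.α N y + (z - y))
    (h2 : rot E.α N y + (z - y) < E.right (E.word y N)) : E.Agree (N + 1) y z := by
  intro t ht
  rcases Nat.lt_succ_iff_lt_or_eq.1 ht with ht | rfl
  · exact h t ht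
  · have := h.rot_sub hy hz le_rfl
    exact ((E.code_eq_iff _ (rot_mem _ _ z) _).2 ⟨by linarith, by linarith⟩).symm

theorem Agree.of_le_of_le {N : ℕ} {y z v : ℝ} (hy : y ∈ Ico (0 : ℝ) 1) (hz : z ∈ Ico (0 : ℝ) 1)
    (h : E.Agree N y z) (hyv : y ≤ v) (hvz : v ≤ z) : E.Agree N y v := by
  have hv : v ∈ Ico (0 : ℝ) 1 := ⟨hy.1.trans hyv, hvz.trans_lt hz.2⟩
  induction N with
  | zero => intro t ht; omega
  | succ N ih =>
    refine (ih (h.mono (Nat.le_succ N))).succ hy hv ?_ ?_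
    · have := E.left_code_le (rot_mem E.α N y)
      rw [word]
      linarith
    · have h1 := E.lt_right_code (rot_mem E.α N z)
      have h2 := h.rot_sub hy hz (Nat.le_succ N)
      rw [h N (Nat.lt_succ_self N), word]
      linarith

theorem exists_agree_right (y : ℝ) (hy : y ∈ Ico (0 : ℝ) 1) (N : ℕ) :
    ∃ b, y < b ∧ b ≤ 1 ∧ ∀ z ∈ Ico y b, E.Agree N y z := by
  induction N with
  | zero => exact ⟨1, hy.2, le_rfl, fun z _ t ht => by omega⟩
  | succ N ih =>
    obtain ⟨b, hyb, hb, h⟩ := ih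
    have h1 := E.lt_right_code (rot_mem E.α N y)
    have h2 := E.left_code_le (rot_mem E.α N y)
    refine ⟨min b (y + (E.right (E.word y N) - rot E.α N y)), lt_min hyb ?_,
      (min_le_left _ _).trans hb, fun z hz => ?_⟩
    · rw [word]
      linarith
    · have h3 := lt_min_iff.1 hz.2
      refine (h z ⟨hz.1, h3.1⟩).succ hy ⟨hy.1.trans hz.1, h3.1.trans_le hb⟩ ?_ ?_
      · rw [word]
        linarith [hz.1]
      · linarith

variable (E) in
/-- `z` is the left end of its cylinder of length `N`. -/
def IsMin (N : ℕ) (z : ℝ) : Prop := ∀ y ∈ Ico (0 : ℝ) 1, E.Agree N z y → z ≤ y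

theorem le_of_rot_eq_left {N t : ℕ} {y z : ℝ} (hy : y ∈ Ico (0 : ℝ) 1) (hz : z ∈ Ico (0 : ℝ) 1)
    (h : E.Agree N z y) (ht : t < N) {l : A} (hl : rot E.α t z = E.left l) : z ≤ y := by
  have h1 : E.word z t = l := by rw [word, hl, code_left]
  have h2 := E.left_code_le (rot_mem E.α t y)
  rw [← word, ← h t ht, h1] at h2
  linarith [h.rot_sub hz hy ht.le]

theorem exists_agree_left (y : ℝ) (hy : y ∈ Ico (0 : ℝ) 1) (N : ℕ) :
    ∃ z ∈ Ico (0 : ℝ) 1, z ≤ y ∧ E.Agree N y z ∧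
      (z = 0 ∨ ∃ t < N, ∃ l, rot E.α t z = E.left l) := by
  induction N with
  | zero => exact ⟨0, ⟨le_rfl, one_pos⟩, hy.1, fun t ht => by omega, .inl rfl⟩
  | succ N ih =>
    obtain ⟨z, hz, hzy, hag, h⟩ := ih
    have h1 := E.lt_right_code (rot_mem E.α N y)
    have h2 := E.left_code_le (rot_mem E.α N y)
    rw [← word] at h1 h2
    rcases le_total (y - (rot E.α N y - E.left (E.word y N))) z with hle | hle
    · refine ⟨z, hz, hzy, hag.succ hy hz (by linarith) (by linarith), h.imp_right ?_⟩
      rintro ⟨t, ht, hl⟩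
      exact ⟨t, ht.trans (Nat.lt_succ_self N), hl⟩
    · set v := y - (rot E.α N y - E.left (E.word y N)) with hv
      have hvy : v ≤ y := by linarith
      have hvm : v ∈ Ico (0 : ℝ) 1 := ⟨hz.1.trans hle, hvy.trans_lt hy.2⟩
      have hagv : E.Agree N y v := hag.trans (hag.symm.of_le_of_le hz hy hle hvy)
      refine ⟨v, hvm, hvy, hagv.succ hy hvm (by linarith) (by linarith), .inr
        ⟨N, Nat.lt_succ_self N, E.word y N, ?_⟩⟩
      linarith [hagv.rot_sub hy hvm le_rfl]

theorem isMin_of_rot_eq_left {N t : ℕ} {z : ℝ} (hz : z ∈ Ico (0 : ℝ) 1) (ht : t < N) {l : A}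
    (hl : rot E.α t z = E.left l) : E.IsMin N z :=
  fun _ hy h => le_of_rot_eq_left hy hz h ht hl

theorem exists_isMin (y : ℝ) (hy : y ∈ Ico (0 : ℝ) 1) (N : ℕ) :
    ∃ z ∈ Ico (0 : ℝ) 1, E.Agree N y z ∧ E.IsMin N z := by
  obtain ⟨z, hz, -, hag, rfl | ⟨t, ht, l, hl⟩⟩ := E.exists_agree_left y hy N
  · exact ⟨0, hz, hag, fun y hy _ => hy.1⟩
  · exact ⟨z, hz, hag, isMin_of_rot_eq_left hz ht hl⟩

theorem IsMin.eq_of_agree {N : ℕ} {y z : ℝ} (hy : y ∈ Ico (0 : ℝ) 1) (hz : z ∈ Ico (0 : ℝ) 1)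
    (h : E.IsMin N y) (h' : E.IsMin N z) (hag : E.Agree N y z) : y = z :=
  le_antisymm (h z hz hag) (h' y hy hag.symm)

theorem IsMin.eq_zero_or {N : ℕ} {z : ℝ} (hz : z ∈ Ico (0 : ℝ) 1) (h : E.IsMin N z) :
    z = 0 ∨ ∃ t < N, ∃ l, l ≠ E.first ∧ rot E.α t z = E.left l := by
  obtain ⟨v, hv, hvz, hag, hor⟩ := E.exists_agree_left z hz N
  obtain rfl : z = v := le_antisymm (h v hv hag) hvz
  rcases hor with h0 | ⟨t, ht, l, hl⟩
  · exact .inl h0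
  by_cases hf : l = E.first
  · subst hf
    rcases t with _ | t
    · rw [rot_zero hz, E.left_first] at hl
      exact .inl hl
    · refine .inr ⟨t, by omega, E.last, E.last_ne_first, ?_⟩
      apply rot_injOn E.α 1 (rot_mem _ _ _) (E.left_mem _)
      rw [← rot_add, E.rot_one_left_last, add_comm, hl, E.left_first]
  · exact .inr ⟨t, ht, l, hf, hl⟩

variable (E) in
/-- `q` is reached from `z ∈ J` after `t > 0` steps, without meeting `J` strictly in between. -/
def Hits (J : Set ℝ) (z : ℝ) (t : ℕ) (q : ℝ) : Prop :=
  z ∈ J ∧ 0 < t ∧ rot E.α t z = q ∧ ∀ s, 0 < s → s < t → rot E.α s z ∉ J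

theorem Hits.eq {J : Set ℝ} (hJ : J ⊆ Ico 0 1) {z z' q : ℝ} {t t' : ℕ} (h : E.Hits J z t q)
    (h' : E.Hits J z' t' q) : z = z' := by
  wlog hle : t ≤ t' generalizing z z' t t'
  · exact (this h' h (le_of_not_ge hle)).symm
  obtain ⟨s, rfl⟩ := Nat.exists_eq_add_of_le hle
  have h1 : z = rot E.α s z' := by
    apply rot_injOn E.α t (hJ h.1) (rot_mem _ _ _)
    rw [← rot_add, h.2.2.1, h'.2.2.1]
  rcases Nat.eq_zero_or_pos s with rfl | hs
  · rwa [rot_zero (hJ h'.1)] at h1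
  · exact absurd (h1 ▸ h.1) (h'.2.2.2 s hs (by have := h.2.1; omega))

theorem exists_hits {J : Set ℝ} {a b : ℝ} (ha : 0 ≤ a) (hab : a < b) (hb : b ≤ 1)
    (hJ : Ico a b ⊆ J) {q : ℝ} (hq : q ∈ Ico (0 : ℝ) 1) : ∃ z t, E.Hits J z t q := by
  classical
  have hex : ∃ t, 0 < t ∧ ∃ z ∈ J, rot E.α t z = q := by
    obtain ⟨n, hn⟩ := E.irrational.neg.exists_nat_fract_mem_Ioo (q - E.α) ha hab hb
    refine ⟨n + 1, Nat.succ_pos n, _, hJ (Ioo_subset_Ico_self hn), ?_⟩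
    rw [rot, Int.fract_eq_iff]
    refine ⟨hq.1, hq.2, -⌊q - E.α + n * -E.α⌋, ?_⟩
    rw [Int.fract]
    push_cast
    ring
  obtain ⟨ht, z, hz, hzq⟩ := Nat.find_spec hex
  refine ⟨z, Nat.find hex, hz, ht, hzq, fun s hs hst hmem => ?_⟩
  refine Nat.find_min hex (Nat.sub_lt ht hs) ⟨Nat.sub_pos_of_lt hst, _, hmem, ?_⟩
  rw [← rot_add, Nat.sub_add_cancel hst.le, hzq]

theorem exists_first_return {J : Set ℝ} {a b : ℝ} (ha : 0 ≤ a) (hab : a < b) (hb : b ≤ 1)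
    (hJ : Ico a b ⊆ J) {z : ℝ} (hz : z ∈ J) : ∃ t, ∃ q ∈ J, E.Hits J z t q := by
  classical
  have hex : ∃ t, 0 < t ∧ rot E.α t z ∈ J := by
    obtain ⟨n, hn⟩ := E.irrational.exists_nat_fract_mem_Ioo (rot E.α 1 z) ha hab hb
    refine ⟨n + 1, Nat.succ_pos n, ?_⟩
    rw [rot_add]
    exact hJ (Ioo_subset_Ico_self hn)
  obtain ⟨ht, hmem⟩ := Nat.find_spec hex
  exact ⟨Nat.find hex, _, hmem, hz, ht, rfl, fun s hs hst h => Nat.find_min hex hst ⟨hs, h⟩⟩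

theorem Hits.time_eq {J : Set ℝ} {z q q' : ℝ} {t t' : ℕ} (hq : q ∈ J) (hq' : q' ∈ J)
    (h : E.Hits J z t q) (h' : E.Hits J z t' q') : t = t' := by
  rcases lt_trichotomy t t' with hlt | rfl | hlt
  · exact absurd (h.2.2.1 ▸ hq) (h'.2.2.2 t h.2.1 hlt)
  · rfl
  · exact absurd (h'.2.2.1 ▸ hq') (h.2.2.2 t' h'.2.1 hlt)

variable (E) in
/-- The set of points whose coding starts with `w`. -/
def cylinder (w : List A) : Set ℝ := {y | y ∈ Ico (0 : ℝ) 1 ∧ OccursAt (E.word y) w 0}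

theorem cylinder_subset (w : List A) : E.cylinder w ⊆ Ico 0 1 := fun _ h => h.1

theorem rot_mem_cylinder {w : List A} {t : ℕ} {y : ℝ} :
    rot E.α t y ∈ E.cylinder w ↔ OccursAt (E.word y) w t := by
  simp only [cylinder, mem_ofPred_eq, rot_mem, true_and, OccursAt, word_rot, add_comm, add_zero]

theorem mem_cylinder_of_agree {w : List A} {y z : ℝ} (hy : y ∈ E.cylinder w)
    (hz : z ∈ Ico (0 : ℝ) 1) (h : E.Agree w.length y z) : z ∈ E.cylinder w := by
  refine ⟨hz, fun j => ?_⟩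
  rw [← hy.2 j, h (0 + j) (by omega)]

theorem agree_of_mem_cylinder {w : List A} {y z : ℝ} (hy : y ∈ E.cylinder w)
    (hz : z ∈ E.cylinder w) : E.Agree w.length y z := by
  intro t ht
  have h1 := hy.2 ⟨t, ht⟩
  have h2 := hz.2 ⟨t, ht⟩
  simp only [zero_add] at h1 h2
  rw [h1, h2]

theorem Agree.rot {M N t : ℕ} {y z : ℝ} (h : E.Agree M y z) (hN : N + t ≤ M) :
    E.Agree N (rot E.α t y) (rot E.α t z) := by
  intro s hs
  rw [word_rot, word_rot]
  exact h _ (by omega)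

variable (E) in
/-- The first `t` letters of the coding of `z`. -/
noncomputable def pre (z : ℝ) (t : ℕ) : List A := List.ofFn (fun s : Fin t => E.word z s)

theorem pre_eq_iff {z z' : ℝ} {t t' : ℕ} : E.pre z t = E.pre z' t' ↔ t = t' ∧ E.Agree t z z' := by
  constructor
  · intro h
    obtain rfl : t = t' := by simpa [pre] using congrArg List.length h
    refine ⟨rfl, fun s hs => ?_⟩
    exact congrFun (List.ofFn_injective h) ⟨s, hs⟩
  · rintro ⟨rfl, h⟩
    rw [pre, pre]
    congr 1
    funext s
    exact h s s.2

theorem Hits.of_agree {w : List A} {z z' q : ℝ} {t : ℕ} (h : E.Hits (E.cylinder w) z t q)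
    (hq : q ∈ E.cylinder w) (hz' : z' ∈ Ico (0 : ℝ) 1) (hag : E.Agree (w.length + t) z z') :
    E.Hits (E.cylinder w) z' t (rot E.α t z') ∧ rot E.α t z' ∈ E.cylinder w := by
  obtain ⟨hz, ht, rfl, hs⟩ := h
  refine ⟨⟨mem_cylinder_of_agree hz hz' (hag.mono (by omega)), ht, rfl, fun s hs0 hst hmem => ?_⟩,
    mem_cylinder_of_agree hq (rot_mem _ _ _) (hag.rot le_rfl)⟩
  exact hs s hs0 hst (mem_cylinder_of_agree hmem (rot_mem _ _ _) (hag.symm.rot (by omega)))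

theorem mem_returnWords_iff {w : List A} {y r} :
    r ∈ ReturnWords (E.word y) w ↔ ∃ i t, ∃ q ∈ E.cylinder w,
      E.Hits (E.cylinder w) (rot E.α i y) t q ∧ r = E.pre (rot E.α i y) t := by
  constructor
  · rintro ⟨i, j, hi, hj, hij, hmin, rfl⟩
    obtain ⟨t, rfl⟩ := Nat.exists_eq_add_of_le hij.le
    refine ⟨i, t, rot E.α (i + t) y, rot_mem_cylinder.2 hj, ⟨rot_mem_cylinder.2 hi, by omega, ?_,
      fun s hs hst => ?_⟩, ?_⟩
    · rw [← rot_add, add_comm]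
    · rw [← rot_add, rot_mem_cylinder]
      exact hmin _ (by omega) (by omega)
    · rw [Nat.add_sub_cancel_left, pre]
      simp only [word_rot, add_comm]
  · rintro ⟨i, t, q, hq, ⟨hi, ht, rfl, hs⟩, rfl⟩
    rw [← rot_add, rot_mem_cylinder] at hq
    refine ⟨i, t + i, rot_mem_cylinder.1 hi, hq, by omega, fun s h1 h2 => ?_, ?_⟩
    · have := hs (s - i) (by omega) (by omega)
      rwa [← rot_add, Nat.sub_add_cancel h1.le, rot_mem_cylinder] at this
    · rw [Nat.add_sub_cancel, pre]
      simp only [word_rot, add_comm]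

variable (E) in
/-- The left ends of the cylinders of complete return words over `w`. -/
def returnEnds (w : List A) : Set ℝ :=
  {z | ∃ t, ∃ q ∈ E.cylinder w, E.Hits (E.cylinder w) z t q ∧ E.IsMin (w.length + t) z}

theorem ncard_returnWords (w : List A) (y : ℝ) :
    (ReturnWords (E.word y) w).ncard = (E.returnEnds w).ncard ∧
      ((E.returnEnds w).Finite → (ReturnWords (E.word y) w).Finite) := by
  classical
  let f : ℝ → List A := fun z =>
    if h : ∃ t, ∃ q ∈ E.cylinder w, E.Hits (E.cylinder w) z t q then E.pre z h.choose else []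
  have hf : ∀ z t q, q ∈ E.cylinder w → E.Hits (E.cylinder w) z t q → f z = E.pre z t := by
    intro z t q hq h
    have hex : ∃ t, ∃ q ∈ E.cylinder w, E.Hits (E.cylinder w) z t q := ⟨t, q, hq, h⟩
    obtain ⟨q', hq', h'⟩ := hex.choose_spec
    simp only [f, dif_pos hex]
    rw [h'.time_eq hq' hq h]
  have himage : f '' E.returnEnds w = ReturnWords (E.word y) w := by
    ext r
    constructor
    · rintro ⟨z, ⟨t, q, hq, h, -⟩, rfl⟩
      have hz := cylinder_subset _ h.1
      obtain ⟨b, hzb, hb, hag⟩ := E.exists_agree_right z hz (w.length + t)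
      obtain ⟨n, hn⟩ := E.irrational.exists_nat_fract_mem_Ioo y hz.1 hzb hb
      have hag' := hag _ (Ioo_subset_Ico_self hn)
      obtain ⟨h1, h2⟩ := h.of_agree hq (rot_mem E.α n y) hag'
      rw [mem_returnWords_iff, hf z t q hq h]
      exact ⟨n, t, _, h2, h1, pre_eq_iff.2 ⟨rfl, hag'.mono (by omega)⟩⟩
    · rw [mem_returnWords_iff]
      rintro ⟨i, t, q, hq, h, rfl⟩
      obtain ⟨z, hz, hag, hmin⟩ := E.exists_isMin _ (rot_mem E.α i y) (w.length + t)
      obtain ⟨h1, h2⟩ := h.of_agree hq hz hag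
      refine ⟨z, ⟨t, _, h2, h1, hmin⟩, ?_⟩
      rw [hf z t _ h2 h1]
      exact pre_eq_iff.2 ⟨rfl, hag.symm.mono (by omega)⟩
  have hinj : InjOn f (E.returnEnds w) := by
    rintro z ⟨t, q, hq, h, hmin⟩ z' ⟨t', q', hq', h', hmin'⟩ hzz
    rw [hf z t q hq h, hf z' t' q' hq' h', pre_eq_iff] at hzz
    obtain ⟨rfl, hag⟩ := hzz
    refine hmin.eq_of_agree (cylinder_subset _ h.1) (cylinder_subset _ h'.1) hmin' ?_
    intro s hs
    rcases lt_or_ge s t with hst | hts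
    · exact hag s hst
    · have := agree_of_mem_cylinder hq hq' (s - t) (by omega)
      rwa [← h.2.2.1, ← h'.2.2.1, word_rot, word_rot, Nat.sub_add_cancel hts] at this
  rw [← himage]
  exact ⟨hinj.ncard_image, fun h => h.image f⟩

theorem returnEnds_eq_range {w : List A} (hw : (E.cylinder w).Nonempty) :
    ∃ g : A → ℝ, Function.Injective g ∧ range g = E.returnEnds w := by
  classical
  obtain ⟨y, hy⟩ := hw
  obtain ⟨a, ha, hag, hmin⟩ := E.exists_isMin y hy.1 w.length
  have haJ : a ∈ E.cylinder w := mem_cylinder_of_agree hy ha hag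
  have hale : ∀ z ∈ E.cylinder w, a ≤ z := fun z hz => hmin z hz.1 (agree_of_mem_cylinder haJ hz)
  obtain ⟨b, hab, hb, hagb⟩ := E.exists_agree_right a ha w.length
  have hJ : Ico a b ⊆ E.cylinder w := fun z hz =>
    mem_cylinder_of_agree haJ ⟨ha.1.trans hz.1, hz.2.trans_le hb⟩ (hagb z hz)
  -- a point of the cylinder that meets a division point within the length of `w` is the left end
  have heqa : ∀ z ∈ E.cylinder w, ∀ t < w.length, ∀ l, rot E.α t z = E.left l → z = a :=
    fun z hz t ht l hl => le_antisymm
      (le_of_rot_eq_left ha hz.1 (agree_of_mem_cylinder hz haJ) ht hl) (hale z hz)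
  obtain ⟨i, hi, hai⟩ : ∃ i, i ≠ E.first ∧
      ((a = 0 ∧ i = E.last) ∨ ∃ s < w.length, rot E.α s a = E.left i) := by
    rcases hmin.eq_zero_or ha with h0 | ⟨s, hs, l, hl, hsl⟩
    · exact ⟨E.last, E.last_ne_first, .inl ⟨h0, rfl⟩⟩
    · exact ⟨l, hl, .inr ⟨s, hs, hsl⟩⟩
  have hai' : SameOrbit E.α a (E.left i) := by
    rcases hai with ⟨rfl, rfl⟩ | ⟨s, -, hs⟩
    · have := sameOrbit_rot E.α 1 (E.left E.last)
      rwa [E.rot_one_left_last] at this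
    · exact hs ▸ (sameOrbit_rot E.α s a).symm
  let Q : A → ℝ := fun l => if l = i then a else rot E.α 1 (E.left l)
  have hQi : Q i = a := if_pos rfl
  have hQ : ∀ l, l ≠ i → Q l = rot E.α 1 (E.left l) := fun l hl => if_neg hl
  have hQmem : ∀ l, Q l ∈ Ico (0 : ℝ) 1 := by
    intro l
    by_cases hl : l = i
    · rw [hl, hQi]
      exact ha
    · rw [hQ l hl]
      exact rot_mem _ _ _
  have hQorb : ∀ l, SameOrbit E.α (Q l) (E.left l) := by
    intro l
    by_cases hl : l = i
    · rw [hl, hQi]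
      exact hai'
    · rw [hQ l hl]
      exact sameOrbit_rot _ _ _
  choose p T hp using fun l => E.exists_hits ha.1 hab hb hJ (hQmem l)
  have hporb : ∀ l, SameOrbit E.α (p l) (E.left l) := fun l =>
    ((hp l).2.2.1 ▸ (sameOrbit_rot E.α (T l) (p l)).symm).trans (hQorb l)
  have hpa : ∀ l, l ≠ E.first → p l ≠ a := by
    intro l hl hla
    obtain rfl : l = i := E.eq_of_sameOrbit l i hl hi ((hporb l).symm.trans (hla ▸ hai'))
    have := (hp l).2.2.1
    rw [hQi, hla] at this
    exact rot_ne_self E.irrational (hp l).2.1.ne' a this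
  refine ⟨fun l => if l = E.first then a else p l, ?_, ?_⟩
  · intro l l' hll
    simp only at hll
    split_ifs at hll with h1 h2 h2
    · rw [h1, h2]
    · exact absurd hll.symm (hpa l' h2)
    · exact absurd hll (hpa l h1)
    · exact E.eq_of_sameOrbit l l' h1 h2 ((hporb l).symm.trans (hll ▸ hporb l'))
  apply Subset.antisymm
  · rintro _ ⟨l, rfl⟩
    simp only
    split_ifs with hl
    · obtain ⟨t, q, hq, h⟩ := E.exists_first_return ha.1 hab hb hJ haJ
      exact ⟨t, q, hq, h, fun y hy h => hmin y hy (h.mono (by omega))⟩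
    · have hpl := hp l
      have hpm := cylinder_subset _ hpl.1
      by_cases hli : l = i
      · rw [hli, hQi] at hpl
        rw [hli] at hpm ⊢
        refine ⟨_, a, haJ, hpl, fun y hy h => ?_⟩
        have h1 := hale _ (hpl.of_agree haJ hy h).2
        have h2 := h.rot_sub hpm hy (t := T i) (by omega)
        rw [hpl.2.2.1] at h2
        linarith
      · obtain ⟨t, q, hq, h⟩ := E.exists_first_return ha.1 hab hb hJ hpl.1
        refine ⟨t, q, hq, h, ?_⟩
        rw [hQ l hli] at hpl
        obtain ⟨hz, hpos, hrot, hs⟩ := hpl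
        obtain ⟨s, hsT⟩ := Nat.exists_eq_add_of_le' hpos
        have hle : T l ≤ t := by
          by_contra! hlt
          exact hs t h.2.1 hlt (h.2.2.1 ▸ hq)
        refine isMin_of_rot_eq_left hpm (t := s) (l := l) (by omega) ?_
        apply rot_injOn E.α 1 (rot_mem _ _ _) (E.left_mem _)
        rw [← rot_add, ← hrot, hsT, add_comm]
  · rintro z ⟨t, q, hq, h, hzmin⟩
    have hz := cylinder_subset _ h.1
    by_cases hza : z = a
    · exact ⟨E.first, by simp [hza]⟩
    suffices ∃ l s, l ≠ E.first ∧ E.Hits (E.cylinder w) z s (Q l) by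
      obtain ⟨l, s, hl, hs⟩ := this
      exact ⟨l, by simp only [if_neg hl]; exact (hp l).eq (cylinder_subset w) hs⟩
    have h0 : z ≠ 0 := by
      rintro rfl
      exact hza (le_antisymm ha.1 (hale _ h.1))
    obtain ⟨s, hs, l, hl, hsl⟩ := (hzmin.eq_zero_or hz).resolve_left h0
    rcases lt_or_ge s t with hst | hts
    · by_cases hli : l = i
      · subst hli
        have hret : ∀ v, 0 < v → v ≤ t → rot E.α v z = a → E.Hits (E.cylinder w) z v (Q l) := by
          intro v hv hvt hva
          refine ⟨h.1, hv, hva.trans hQi.symm, fun u hu huv => h.2.2.2 u hu (by omega)⟩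
        rcases hai with ⟨ha0, hlast⟩ | ⟨v, hv, hvl⟩
        · refine ⟨l, s + 1, hl, hret _ (Nat.succ_pos s) hst ?_⟩
          rw [add_comm, rot_add, hsl, hlast, E.rot_one_left_last, ha0]
        · rcases le_or_gt s v with hsv | hvs
          · exact absurd (heqa z h.1 s (by omega) l hsl) hza
          · refine ⟨l, s - v, hl, hret _ (by omega) (by omega) ?_⟩
            apply rot_injOn E.α v (rot_mem _ _ _) ha
            rw [← rot_add, Nat.add_sub_cancel' hvs.le, hsl, hvl]
      · refine ⟨l, s + 1, hl, h.1, Nat.succ_pos s, ?_, fun u hu hus => h.2.2.2 u hu (by omega)⟩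
        rw [hQ l hli, add_comm, rot_add, hsl]
    · have hqa : q = a := by
        refine heqa q hq (s - t) (by omega) l ?_
        rw [← h.2.2.1, ← rot_add, Nat.sub_add_cancel hts, hsl]
      obtain rfl : l = i := by
        refine E.eq_of_sameOrbit l i hl hi (SameOrbit.trans ?_ hai')
        have h1 := (sameOrbit_rot E.α s z)
        have h2 := (sameOrbit_rot E.α t z).symm
        rw [hsl] at h1
        rw [h.2.2.1, hqa] at h2
        exact h1.trans h2
      exact ⟨l, t, hl, by rwa [hQi, ← hqa]⟩

theorem returnWords_finite_and_ncard [Finite A] (y : ℝ) {w : List A}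
    (hw : IsFactor (E.word y) w) :
    (ReturnWords (E.word y) w).Finite ∧ (ReturnWords (E.word y) w).ncard = Nat.card A := by
  obtain ⟨i, hi⟩ := hw
  obtain ⟨g, hg, hrange⟩ := E.returnEnds_eq_range ⟨_, rot_mem_cylinder.2 hi⟩
  obtain ⟨h1, h2⟩ := E.ncard_returnWords w y
  rw [← hrange] at h1 h2
  refine ⟨h2 (finite_range g), h1.trans ?_⟩
  rw [← image_univ, ncard_image_of_injective _ hg, ncard_univ]

end CyclicExchange

theorem exists_mem_Ico_of_lt {k : ℕ} (β : Fin (k + 1) → ℝ) {y : ℝ} (h0 : β 0 ≤ y)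
    (j : Fin (k + 1)) (hj : y < β j) : ∃ l : Fin k, y ∈ Ico (β l.castSucc) (β l.succ) := by
  induction j using Fin.induction with
  | zero => exact absurd hj (not_lt.2 h0)
  | succ j ih =>
    rcases lt_or_ge y (β j.castSucc) with h | h
    · exact ih h
    · exact ⟨j, h, hj⟩

/-- If the lengths of the intervals of a partition of `[0, 1)` are rationally independent and the
`i`-th interval has length `α`, then its left end points other than the right end point of the
`i`-th interval lie on distinct orbits of the rotation by `α`. -/
theorem eq_of_sameOrbit_of_linearIndependent {k : ℕ} {α : ℝ} {β : Fin (k + 1) → ℝ}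
    (hβ0 : β 0 = 0) (hβk : β (Fin.last k) = 1)
    (hind : LinearIndependent ℚ (fun i : Fin k => β i.succ - β i.castSucc))
    {i : Fin k} (hi : β i.succ - β i.castSucc = α) {l l' : Fin k} (hll : l' ≤ l)
    (hl : (l : ℕ) ≠ i + 1) (hl' : (l' : ℕ) = 0 → (i : ℕ) + 1 ≠ k)
    (h : SameOrbit α (β l.castSucc) (β l'.castSucc)) : l = l' := by
  have hsum : ∀ j : Fin (k + 1), β j = ∑ r : Fin k, if r.castSucc < j then β r.succ - β r.castSucc
      else 0 := by
    intro j
    induction j using Fin.induction with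
    | zero => simp [hβ0]
    | succ j ih =>
      have : ∀ r : Fin k, (if r.castSucc < j.succ then β r.succ - β r.castSucc else 0) =
          (if r.castSucc < j.castSucc then β r.succ - β r.castSucc else 0) +
          if r = j then β r.succ - β r.castSucc else 0 := by
        intro r
        rcases lt_trichotomy r j with hr | rfl | hr
        · have h1 : r.castSucc < j.succ := by
            rw [Fin.lt_def] at hr ⊢
            simp only [Fin.val_castSucc, Fin.val_succ]
            omega
          simp [h1, hr, hr.ne]
        · simp
        · have h1 : ¬ r.castSucc < j.succ := by
            rw [Fin.lt_def] at hr ⊢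
            simp only [Fin.val_castSucc, Fin.val_succ]
            omega
          simp [h1, hr.not_gt, hr.ne']
      simp only [this, Finset.sum_add_distrib, ← ih]
      simp
  obtain ⟨m, n, h⟩ := h
  have hone : (1 : ℝ) = ∑ r : Fin k, (β r.succ - β r.castSucc) := by
    rw [← hβk, hsum (Fin.last k)]
    simp [Fin.castSucc_lt_last]
  have hcoef := Fintype.linearIndependent_iff.1 hind (fun r =>
    (if r < l then 1 else 0) - (if r < l' then 1 else 0) - m - n * if r = i then 1 else 0) ?_
  · have hcoef' : ∀ r : Fin k, (if r < l then (1 : ℤ) else 0) - (if r < l' then 1 else 0) - m -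
        n * (if r = i then 1 else 0) = 0 := by
      intro r
      have := hcoef r
      exact_mod_cast this
    by_contra hne
    have hlt : l' < l := lt_of_le_of_ne hll (Ne.symm hne)
    by_cases hm : m = 0
    · -- only the `i`-th interval lies between the two points
      have hmem : ∀ r : Fin k, l' ≤ r → r < l → r = i := by
        intro r h1 h2
        by_contra hri
        have := hcoef' r
        simp [h2, h1.not_gt, hri, hm] at this
      have h1 : l' = i := hmem l' le_rfl hlt
      have h2 : (l : ℕ) - 1 < k := by omega
      have h3 := hmem ⟨(l : ℕ) - 1, h2⟩ (by rw [Fin.le_def]; simp; omega)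
        (by rw [Fin.lt_def]; simp; omega)
      have h4 := congrArg Fin.val h3
      simp at h4
      omega
    · have hmem : ∀ r : Fin k, r ≠ i → l' ≤ r ∧ r < l := by
        intro r hri
        have := hcoef' r
        by_contra hcon
        split_ifs at this <;> grind
      have h1 : l = i := by
        by_contra hli
        exact absurd (hmem l hli).2 (lt_irrefl l)
      have h2 : (⟨k - 1, by omega⟩ : Fin k) = i := by
        by_contra hli
        have := (hmem _ hli).2
        rw [Fin.lt_def] at this
        simp at this
        omega
      have h3 : (⟨0, by omega⟩ : Fin k) ≠ i := by
        intro h0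
        rw [h1, ← h0, Fin.lt_def] at hlt
        exact absurd hlt (Nat.not_lt_zero _)
      have h4 := (hmem _ h3).1
      rw [Fin.le_def] at h4
      have h5 := congrArg Fin.val h2
      simp at h4 h5
      exact hl' (by rw [h4]) (by omega)
  · have h1 := hsum l.castSucc
    have h2 := hsum l'.castSucc
    have h3 : α = ∑ r : Fin k, if r = i then β r.succ - β r.castSucc else 0 := by
      simp [hi]
    have h4 : (β l.castSucc - β l'.castSucc) - m * 1 - n * α = 0 := by linarith
    rw [h1, h2, h3, hone, Finset.mul_sum, Finset.mul_sum, ← Finset.sum_sub_distrib,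
      ← Finset.sum_sub_distrib, ← Finset.sum_sub_distrib] at h4
    rw [← h4]
    refine Finset.sum_congr rfl fun r _ => ?_
    rw [Rat.smul_def]
    simp only [Fin.castSucc_lt_castSucc_iff]
    push_cast
    split_ifs <;> ring

theorem exists_cyclicExchange {k : ℕ} {α : ℝ} (hα : Irrational α) (hα01 : α ∈ Ioo (0 : ℝ) 1)
    {β : Fin (k + 1) → ℝ} (hβ : StrictMono β) (hβ0 : β 0 = 0) (hβk : β (Fin.last k) = 1)
    (hind : LinearIndependent ℚ (fun i : Fin k => β i.succ - β i.castSucc))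
    {i : Fin k} (hi : β i.succ - β i.castSucc = α) :
    ∃ E : CyclicExchange (Fin k), E.α = α ∧ ∀ y ∈ Ico (0 : ℝ) 1, ∀ l,
      Int.fract (y + β i.succ) ∈ Ico (β l.castSucc) (β l.succ) → E.code y = l := by
  have hnonneg : ∀ j, 0 ≤ β j := fun j => hβ0 ▸ hβ.monotone (Fin.zero_le j)
  have hle_one : ∀ j, β j ≤ 1 := fun j => hβk ▸ hβ.monotone (Fin.le_last j)
  have hlt : ∀ l : Fin k, β l.castSucc < β l.succ := fun l => hβ Fin.castSucc_lt_succ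
  have hcpos : 0 < β i.succ := (hnonneg _).trans_lt (hlt i)
  have hlow : ∀ l : Fin k, l ≤ i → β l.succ ≤ β i.succ := fun l hl =>
    hβ.monotone (Fin.succ_le_succ_iff.2 hl)
  have hhigh : ∀ l : Fin k, i < l → β i.succ ≤ β l.castSucc := fun l hl =>
    hβ.monotone (Fin.le_def.2 (by simpa using hl))
  have hinj : ∀ y, ∀ l l' : Fin k, y ∈ Ico (β l.castSucc) (β l.succ) →
      y ∈ Ico (β l'.castSucc) (β l'.succ) → l = l' := by
    intro y l l' h h'
    have h1 := hβ.lt_iff_lt.1 (h.1.trans_lt h'.2)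
    have h2 := hβ.lt_iff_lt.1 (h'.1.trans_lt h.2)
    rw [Fin.lt_def] at h1 h2
    simp at h1 h2
    omega
  choose code hcode using fun y : ℝ => exists_mem_Ico_of_lt β
    (y := Int.fract (y + β i.succ)) (hβ0 ▸ Int.fract_nonneg _) (Fin.last k)
    (hβk ▸ Int.fract_lt_one _)
  let shift : Fin k → ℝ := fun l => if l ≤ i then β i.succ - 1 else β i.succ
  obtain ⟨first, hfirst, hfirst'⟩ : ∃ first : Fin k, β first.castSucc = shift first ∧
      ∀ l, l ≠ first → (l : ℕ) ≠ i + 1 ∧ ((l : ℕ) = 0 → (i : ℕ) + 1 ≠ k) := by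
    by_cases hik : (i : ℕ) + 1 = k
    · refine ⟨⟨0, by omega⟩, ?_, fun l hl => ⟨by omega, fun h0 => absurd (Fin.ext h0) hl⟩⟩
      have h1 : i.succ = Fin.last k := Fin.ext (by simpa using hik)
      have h2 : (⟨0, by omega⟩ : Fin k) ≤ i := Fin.le_def.2 (Nat.zero_le _)
      simp only [shift, if_pos h2, h1, hβk, sub_self]
      exact hβ0
    · refine ⟨⟨i + 1, by omega⟩, ?_, fun l hl => ⟨fun h0 => hl (Fin.ext h0), fun _ => hik⟩⟩
      have h2 : ¬ (⟨i + 1, by omega⟩ : Fin k) ≤ i := by simp [Fin.le_def]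
      simp only [shift, if_neg h2]
      rfl
  have hshift_orb : ∀ l l' : Fin k, ∃ m : ℤ, shift l - shift l' = m := by
    intro l l'
    simp only [shift]
    split_ifs
    · exact ⟨0, by push_cast; ring⟩
    · exact ⟨-1, by push_cast; ring⟩
    · exact ⟨1, by push_cast; ring⟩
    · exact ⟨0, by push_cast; ring⟩
  refine ⟨{
    α := α
    irrational := hα
    pos := hα01.1
    lt_one := hα01.2
    left := fun l => β l.castSucc - shift l
    right := fun l => β l.succ - shift l
    code := code
    first := first
    last := i
    left_first := sub_eq_zero.2 hfirst
    left_last := by simp only [shift, le_refl, if_true]; linarith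
    right_last := by simp [shift]
    left_nonneg := fun l => ?_
    left_lt_right := fun l => sub_lt_sub_right (hlt l) _
    right_le_one := fun l => ?_
    code_eq_iff := fun y hy l => ?_
    eq_of_sameOrbit := fun l l' hl hl' h => ?_ }, rfl, fun y _ l h => hinj _ _ _ (hcode y) h⟩
  · simp only [shift]
    split_ifs with hl
    · linarith [hnonneg l.castSucc, hle_one i.succ]
    · linarith [hhigh l (not_le.1 hl)]
  · simp only [shift]
    split_ifs with hl
    · linarith [hlow l hl]
    · linarith [hle_one l.succ]
  · have hiff : code y = l ↔ Int.fract (y + β i.succ) ∈ Ico (β l.castSucc) (β l.succ) :=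
      ⟨fun h => h ▸ hcode y, fun h => hinj _ _ _ (hcode y) h⟩
    have hc1 := hle_one i.succ
    have hl0 := hnonneg l.castSucc
    have hl1 := hle_one l.succ
    rw [hiff]
    obtain ⟨hy0, hy1⟩ := hy
    have hfr : (y + β i.succ < 1 ∧ Int.fract (y + β i.succ) = y + β i.succ) ∨
        (1 ≤ y + β i.succ ∧ Int.fract (y + β i.succ) = y + β i.succ - 1) := by
      rcases lt_or_ge (y + β i.succ) 1 with h | h
      · exact .inl ⟨h, Int.fract_eq_self.2 ⟨by linarith, h⟩⟩
      · exact .inr ⟨h, Int.fract_eq_iff.2 ⟨by linarith, by linarith, 1, by push_cast; ring⟩⟩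
    simp only [shift, mem_Ico]
    split_ifs with hl
    · have h3 := hlow l hl
      rcases hfr with ⟨h1, h2⟩ | ⟨h1, h2⟩ <;> rw [h2] <;> constructor <;> rintro ⟨h4, h5⟩ <;>
        constructor <;> linarith
    · have h3 := hhigh l (not_le.1 hl)
      rcases hfr with ⟨h1, h2⟩ | ⟨h1, h2⟩ <;> rw [h2] <;> constructor <;> rintro ⟨h4, h5⟩ <;>
        constructor <;> linarith
  · have horb : SameOrbit α (β l.castSucc) (β l'.castSucc) := by
      obtain ⟨m, n, hmn⟩ := h
      obtain ⟨m', hm'⟩ := hshift_orb l l'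
      exact ⟨m + m', n, by push_cast; linarith⟩
    rcases le_total l' l with hle | hle
    · exact eq_of_sameOrbit_of_linearIndependent hβ0 hβk hind hi hle (hfirst' l hl).1
        (hfirst' l' hl').2 horb
    · exact (eq_of_sameOrbit_of_linearIndependent hβ0 hβk hind hi hle (hfirst' l' hl').1
        (hfirst' l hl).2 horb.symm).symm

/-- the coding of a rotation by irrational `α` with respect to a
partition of the circle into `k` intervals with rationally independent lengths,
one of which has length `α`, has property `R_k`: every factor has exactly `k`
return words. -/
theorem coding_of_rotation_has_property_R_k
    (k : ℕ) (α : ℝ) (hα : Irrational α) (hα01 : α ∈ Set.Ioo (0:ℝ) 1)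
    (β : Fin (k + 1) → ℝ) (hβ : StrictMono β)
    (hβ0 : β 0 = 0) (hβk : β (Fin.last k) = 1)
    (hind : LinearIndependent ℚ (fun i : Fin k => β i.succ - β i.castSucc))
    (hlen : ∃ i : Fin k, β i.succ - β i.castSucc = α)
    (x : ℝ) (hx : x ∈ Set.Ico (0:ℝ) 1)
    (u : ℕ → Fin k)
    (hu : ∀ n : ℕ,
      Int.fract (x + (n : ℝ) * α) ∈ Set.Ico (β (u n).castSucc) (β (u n).succ)) :
    ∀ w : List (Fin k), IsFactor u w →
      (ReturnWords u w).Finite ∧ (ReturnWords u w).ncard = k := by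
  intro w hw
  obtain ⟨i, hi⟩ := hlen
  obtain ⟨E, rfl, hE⟩ := exists_cyclicExchange hα hα01 hβ hβ0 hβk hind hi
  obtain rfl : u = E.word (Int.fract (x - β i.succ)) := by
    funext n
    refine (hE (rot E.α n _) (rot_mem _ _ _) (u n) ?_).symm
    convert hu n using 1
    rw [Int.fract_eq_fract]
    obtain ⟨m, hm⟩ : ∃ m : ℤ, rot E.α n (Int.fract (x - β i.succ)) = x - β i.succ + n * E.α - m :=
      ⟨⌊x - β i.succ⌋ + ⌊Int.fract (x - β i.succ) + n * E.α⌋, by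
        rw [rot, Int.fract, Int.fract]; push_cast; ring⟩
    exact ⟨-m, by rw [hm]; push_cast; ring⟩
  simpa using E.returnWords_finite_and_ncard (Int.fract (x - β i.succ)) hw
end
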